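/- Let θ : [0,∞) → [0,∞) be defined by θ(t) := min{1, max{t−1, 0}}. Let u : ℝ → ℝ be integrable and right-continuous. Then for every family (u_δ)_{δ>0} of measurable functions with u_δ → u in L¹(ℝ) as δ → 0⁺, one has liminf_{δ→0⁺} Λ_{δ,1}(θ,u_δ,ℝ) ≥ 2 log 2 · TV(u); moreover, if TV(u) < ∞ there exists such a family with lim_{δ→0⁺} Λ_{δ,1}(θ,u_δ,ℝ) = 2 log 2 · TV(u). (Since N(θ) = log 2 and G_{1,1} = 2, this means the shape factor of θ equals 1.) -/

import Mathlib

/-!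
The constant `2 log 2` in the lower bound comes from a discrete inequality. For integer heights on
`N` equally spaced points, let a pair at distance `k` whose heights differ by at least `2` cost
`1 / (k (k - 1))`. Removing a point of maximal height destroys at least a computable number of such
pairs (`hostPairs_remove`), so by induction on the number of points the energy is at least a sum of
logarithms of the sizes of the level sets (`energy_lower`). The inequality between arithmetic and
geometric means turns this into `n log 2 - C` for a sequence going from height `0` to height `n`
(`energy_heights`), with `C` depending only on the proportion of points at the two extreme heights.

Rounding a real sequence after a random shift makes a pair `a, b` differ by at least `2` with
probability at most `θ |a - b|`, hence the same bound holds for real sequences with interaction `θ`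
(`energy_theta`). It is applied to the restrictions of a function to lattices of width `ε`, averaged
over the lattice shift and then over `ε` against `dε / ε ^ 2`, which rebuilds the kernel
`1 / |y - x| ^ 2` (`le_lintegral_of_lattice`). This gives `theta_energy_ge`: a function which climbs
by `n` across an interval, in the sense of measure, has energy at least about `2 n log 2` there.
Now fix a partition. Right-continuity of `u` and `L¹` convergence make `u_δ / δ` climb by about
`|u (x_{i+1}) - u (x_i)| / δ` on disjoint intervals; after multiplication by `δ` the additive
constants disappear and `liminf_Lambda1_ge` follows.

For the recovery family, a compactly supported Lipschitz function with a right derivative `g`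
everywhere satisfies `limsup Λ_δ ≤ 2 log 2 ∫ |g|`, by dominated convergence after the change of
variables `y = x + δ t` and the computation `∫ θ(c t) / t ^ 2 dt = c log 2` (`limsup_Lambda1_le`).
Soft thresholds of `u` have compact support, since a function of bounded variation in `L¹` vanishes
at infinity, and their Steklov averages are Lipschitz with `∫ |g| ≤ TV(u)`; both operations are
close to the identity in `L¹` (`exists_recovery_approx`). A diagonal choice concludes.
-/

open MeasureTheory Filter Set Topology ENNReal

/-- The functional `Λ_{δ,p}(φ,u,Ω)` in dimension one. -/
noncomputable def Lambda1 (φ : ℝ → ℝ) (p δ : ℝ) (u : ℝ → ℝ) (Ω : Set ℝ) : ℝ≥0∞ :=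
  ∫⁻ x in Ω, ∫⁻ y in Ω, ENNReal.ofReal (φ (|u y - u x| / δ) * δ ^ p / |y - x| ^ (1 + p))

/-- The interaction law `φ_k`. -/
noncomputable def phik (k t : ℝ) : ℝ := if t ≤ k then 0 else 1

/-- The interaction law `θ(t) = min{1, max{t-1, 0}}`. -/
noncomputable def theta (t : ℝ) : ℝ := min 1 (max (t - 1) 0)

/-! ### Hostile pairs -/

/-- Two integer heights are *hostile* when they differ by at least `2`. -/
def Hostile (a b : ℕ) : Prop := a + 2 ≤ b ∨ b + 2 ≤ a

instance (a b : ℕ) : Decidable (Hostile a b) := by unfold Hostile; infer_instance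

/-- Number of hostile pairs of a finite sequence at positions at most `d` apart. -/
def hostPairs (d : ℕ) {N : ℕ} (v : Fin N → ℕ) : ℤ :=
  ∑ i : Fin N, ∑ j : Fin N, if i < j ∧ (j : ℕ) ≤ i + d ∧ Hostile (v i) (v j) then 1 else 0

lemma sum_fin_unique_le {n : ℕ} (P : Fin n → Prop) [DecidablePred P] (Q : Prop) [Decidable Q]
    (h1 : ∀ i j, P i → P j → i = j) (h2 : ∀ i, P i → Q) :
    (∑ i, if P i then (1 : ℤ) else 0) ≤ if Q then 1 else 0 := by
  rw [Finset.sum_boole]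
  by_cases h : ∃ i, P i
  · obtain ⟨i, hi⟩ := h
    rw [if_pos (h2 i hi)]
    norm_cast
    rw [Finset.card_le_one]
    intro a ha b hb
    simp only [Finset.mem_filter] at ha hb
    exact h1 a b ha.2 hb.2
  · have : Finset.filter P Finset.univ = ∅ := by
      ext i; simp only [Finset.mem_filter, Finset.mem_univ, true_and]; simp
      exact fun hi => h ⟨i, hi⟩
    rw [this]
    split_ifs <;> simp

lemma window_count {n d : ℕ} {p : ℕ} (hp : p ≤ n) :
    (min d n : ℤ) + ∑ i : Fin n, (if (i : ℕ) < p ∧ p ≤ i + d ∧ i + d < n then (1 : ℤ) else 0)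
      ≤ ∑ i : Fin n, (if p ≤ (i : ℕ) + d ∧ (i : ℕ) < p + d then (1 : ℤ) else 0) := by
  rw [← Finset.sum_range (fun i => if i < p ∧ p ≤ i + d ∧ i + d < n then (1 : ℤ) else 0),
    ← Finset.sum_range (fun i => if p ≤ i + d ∧ i < p + d then (1 : ℤ) else 0),
    Finset.sum_boole, Finset.sum_boole]
  have e1 : (Finset.range n).filter (fun i => i < p ∧ p ≤ i + d ∧ i + d < n)
      = Finset.Ico (p - d) (min p (n - d)) := by
    ext i; simp only [Finset.mem_filter, Finset.mem_range, Finset.mem_Ico]; omega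
  have e2 : (Finset.range n).filter (fun i => p ≤ i + d ∧ i < p + d)
      = Finset.Ico (p - d) (min n (p + d)) := by
    ext i; simp only [Finset.mem_filter, Finset.mem_range, Finset.mem_Ico]; omega
  rw [e1, e2, Nat.card_Ico, Nat.card_Ico]
  omega

/-- Deleting a point `p` of maximal height from a sequence removes at least
`min d n - b` hostile pairs at distance at most `d`, `b` being the number of remaining points that
are not hostile to `p`. The pairs gained by the contraction straddle `p` at distance exactly `d`;
one endpoint of each of them is hostile to `p`, because `p` is maximal. -/
lemma hostPairs_remove (d : ℕ) {n : ℕ} (v : Fin (n + 1) → ℕ) (p : Fin (n + 1))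
    (hp : ∀ i, v i ≤ v p) :
    hostPairs d (v ∘ p.succAbove) +
      max ((min d n : ℤ) -
        ∑ i : Fin n, if Hostile (v p) (v (p.succAbove i)) then (0 : ℤ) else 1) 0
      ≤ hostPairs d v := by
  have hsucc : ∀ i : Fin n, ((p.succAbove i : Fin (n+1)) : ℕ)
      = if (i : ℕ) < p then (i : ℕ) else i + 1 := by
    intro i
    unfold Fin.succAbove
    simp only [Fin.lt_def, Fin.val_castSucc]
    split_ifs <;> simp
  set w : Fin n → ℕ := v ∘ p.succAbove with hw
  have hwv : ∀ i, v (p.succAbove i) = w i := fun i => rfl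
  simp only [hwv]
  have hwp : ∀ i, w i ≤ v p := fun i => hp _
  set A : ℤ := ∑ i : Fin n, if (p ≤ (i : ℕ) + d ∧ (i : ℕ) < p + d) ∧ Hostile (v p) (w i)
    then (1 : ℤ) else 0 with hA
  set S : ℤ := ∑ i : Fin n, ∑ j : Fin n,
    if ((j : ℕ) = i + d ∧ (i : ℕ) < p ∧ (p : ℕ) ≤ j) ∧ Hostile (w i) (w j) then (1 : ℤ) else 0
    with hS
  -- `A` counts the lost pairs containing `p`, `S` the pairs brought to distance `d` by the deletion
  have key : hostPairs d v + S = hostPairs d w + A := by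
    unfold hostPairs
    rw [Fin.sum_univ_succAbove _ p]
    simp_rw [Fin.sum_univ_succAbove _ p]
    simp only [lt_self_iff_false, false_and, if_false, zero_add, hwv]
    rw [Finset.sum_add_distrib]
    have r1 : ∀ a b c e f g : ℤ, a + b = g → c + e = f → a + (b + c) + e = f + g := by
      intros; linarith
    apply r1
    · rw [hA, ← Finset.sum_add_distrib]
      apply Finset.sum_congr rfl
      intro i _
      have hc : Hostile (w i) (v p) ↔ Hostile (v p) (w i) := by unfold Hostile; omega
      simp only [Fin.lt_def, hsucc, hc]
      by_cases hg : Hostile (v p) (w i)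
      · simp only [hg, and_true]
        split_ifs <;> omega
      · simp [hg]
    · rw [hS, ← Finset.sum_add_distrib]
      apply Finset.sum_congr rfl
      intro i _
      rw [← Finset.sum_add_distrib]
      apply Finset.sum_congr rfl
      intro j _
      simp only [Fin.lt_def, hsucc]
      by_cases hg : Hostile (w i) (w j)
      · simp only [hg, and_true]
        split_ifs <;> omega
      · simp [hg]
  have hSA : S ≤ A := by
    have h1 : S ≤ (∑ i : Fin n, ∑ j : Fin n,
        if ((j : ℕ) = i + d ∧ (i : ℕ) < p ∧ (p : ℕ) ≤ j) ∧ Hostile (v p) (w i) then (1 : ℤ) else 0)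
        + ∑ j : Fin n, ∑ i : Fin n,
        if ((j : ℕ) = i + d ∧ (i : ℕ) < p ∧ (p : ℕ) ≤ j) ∧ Hostile (v p) (w j)
          then (1 : ℤ) else 0 := by
      rw [Finset.sum_comm (f := fun (j : Fin n) (i : Fin n) =>
        if ((j : ℕ) = i + d ∧ (i : ℕ) < p ∧ (p : ℕ) ≤ j) ∧ Hostile (v p) (w j)
          then (1 : ℤ) else 0), ← Finset.sum_add_distrib]
      apply Finset.sum_le_sum
      intro i _
      rw [← Finset.sum_add_distrib]
      apply Finset.sum_le_sum
      intro j _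
      have : Hostile (w i) (w j) → Hostile (v p) (w i) ∨ Hostile (v p) (w j) := by
        have := hwp i
        have := hwp j
        unfold Hostile; omega
      by_cases hB : (j : ℕ) = i + d ∧ (i : ℕ) < p ∧ (p : ℕ) ≤ j
      · simp only [hB, true_and]
        split_ifs <;> first | omega | (exfalso; tauto)
      · simp [hB]
    refine h1.trans ?_
    have h2 : ∀ i : Fin n, (∑ j : Fin n,
        if ((j : ℕ) = i + d ∧ (i : ℕ) < p ∧ (p : ℕ) ≤ j) ∧ Hostile (v p) (w i)
          then (1 : ℤ) else 0)
        ≤ if ((i : ℕ) < p ∧ (p : ℕ) ≤ i + d) ∧ Hostile (v p) (w i) then 1 else 0 := by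
      intro i
      apply sum_fin_unique_le
      · intro a b ha hb; ext; omega
      · intro a ha; refine ⟨by omega, ha.2⟩
    have h3 : ∀ j : Fin n, (∑ i : Fin n,
        if ((j : ℕ) = i + d ∧ (i : ℕ) < p ∧ (p : ℕ) ≤ j) ∧ Hostile (v p) (w j)
          then (1 : ℤ) else 0)
        ≤ if ((p : ℕ) ≤ j ∧ (j : ℕ) < p + d) ∧ Hostile (v p) (w j) then 1 else 0 := by
      intro j
      apply sum_fin_unique_le
      · intro a b ha hb; ext; omega
      · intro a ha; refine ⟨by omega, ha.2⟩
    refine (add_le_add (Finset.sum_le_sum fun i _ => h2 i)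
      (Finset.sum_le_sum fun j _ => h3 j)).trans ?_
    rw [← Finset.sum_add_distrib]
    apply Finset.sum_le_sum
    intro i _
    by_cases hg : Hostile (v p) (w i)
    · simp only [hg, and_true]
      split_ifs <;> omega
    · simp [hg]
  have hSb : (min d n : ℤ) + S
      ≤ A + ∑ i : Fin n, if Hostile (v p) (w i) then (0 : ℤ) else 1 := by
    have h1 : S ≤ ∑ i : Fin n, if (i : ℕ) < p ∧ (p : ℕ) ≤ (i : ℕ) + d ∧ (i : ℕ) + d < n then (1 : ℤ) else 0 := by
      apply Finset.sum_le_sum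
      intro i _
      apply sum_fin_unique_le
      · intro a b ha hb; ext; omega
      · intro a ha; have := a.2; omega
    have h2 : ∑ i : Fin n, (if p ≤ (i : ℕ) + d ∧ (i : ℕ) < p + d then (1 : ℤ) else 0)
        ≤ A + ∑ i : Fin n, if Hostile (v p) (w i) then (0 : ℤ) else 1 := by
      rw [hA, ← Finset.sum_add_distrib]
      apply Finset.sum_le_sum
      intro i _
      split_ifs <;> first | omega | (exfalso; tauto)
    have h3 := window_count (n := n) (d := d) (p := p) (Nat.lt_succ_iff.1 p.2)
    linarith
  have : hostPairs d v = hostPairs d w + A - S := by linarith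
  rw [this]
  rcases le_total ((min d n : ℤ) - ∑ i : Fin n, if Hostile (v p) (w i) then (0 : ℤ) else 1) 0
    with h | h
  · rw [max_eq_right h]; linarith
  · rw [max_eq_left h]; linarith

/-! ### Energy of an integer sequence -/

/-- Energy of a finite sequence of heights: each hostile pair at distance `k` costs `c k`. -/
noncomputable def energy (c : ℕ → ℝ) {N : ℕ} (v : Fin N → ℕ) : ℝ :=
  ∑ i : Fin N, ∑ j : Fin N, if i < j ∧ Hostile (v i) (v j) then c (j - i) else 0

lemma sum_weights (c : ℕ → ℝ) (R k : ℕ) (hk : k ≤ R) (hR : c R = 0) :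
    ∑ d ∈ Finset.range R, (if k ≤ d then c d - c (d + 1) else 0) = c k := by
  rw [← Finset.sum_filter]
  have : (Finset.range R).filter (fun d => k ≤ d) = Finset.Ico k R := by
    ext d; simp only [Finset.mem_filter, Finset.mem_range, Finset.mem_Ico]; omega
  rw [this, Finset.sum_Ico_eq_sub _ hk, Finset.sum_range_sub', Finset.sum_range_sub', hR]
  ring

/-- Layer-cake decomposition of the energy along the distance. -/
lemma energy_eq (c : ℕ → ℝ) (R : ℕ) (hR : c R = 0) {N : ℕ} (hN : N ≤ R) (v : Fin N → ℕ) :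
    energy c v = ∑ d ∈ Finset.range R, (c d - c (d + 1)) * (hostPairs d v : ℝ) := by
  unfold energy hostPairs
  push_cast
  simp_rw [Finset.mul_sum]
  rw [Finset.sum_comm (s := Finset.range R)]
  apply Finset.sum_congr rfl
  intro i _
  rw [Finset.sum_comm (s := Finset.range R)]
  apply Finset.sum_congr rfl
  intro j _
  by_cases h : i < j ∧ Hostile (v i) (v j)
  · rw [if_pos h, ← sum_weights c R (j - i) (by omega) hR]
    apply Finset.sum_congr rfl
    intro d _
    have : (j : ℕ) - i ≤ d ↔ (j : ℕ) ≤ i + d := by omega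
    simp [h.1, h.2, this]
  · rw [if_neg h]
    symm
    apply Finset.sum_eq_zero
    intro d _
    rw [if_neg (fun h' => h ⟨h'.1, h'.2.2⟩), mul_zero]

lemma energy_nonneg {c : ℕ → ℝ} (hc : ∀ k, 0 ≤ c k) {N : ℕ} (v : Fin N → ℕ) :
    0 ≤ energy c v := by
  unfold energy
  refine Finset.sum_nonneg fun i _ => Finset.sum_nonneg fun j _ => ?_
  split_ifs
  · exact hc _
  · exact le_rfl

/-- Energy lost when a point of maximal height is removed, `b` being the number of remaining points
not hostile to it. -/
lemma energy_remove (c : ℕ → ℝ) (hc : Antitone c) (R : ℕ) (hR : c R = 0) {n : ℕ} (hN : n + 1 ≤ R)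
    (v : Fin (n + 1) → ℕ) (p : Fin (n + 1)) (hp : ∀ i, v i ≤ v p) (b : ℕ)
    (hb : ∑ i : Fin n, (if Hostile (v p) (v (p.succAbove i)) then (0 : ℤ) else 1) = b) :
    energy c (v ∘ p.succAbove) + ∑ k ∈ Finset.Ioc b n, c k ≤ energy c v := by
  rw [energy_eq c R hR hN, energy_eq c R hR (by omega)]
  have h1 : ∑ k ∈ Finset.Ioc b n, c k
      = ∑ d ∈ Finset.range R, (c d - c (d + 1)) * ((max ((min d n : ℤ) - b) 0 : ℤ) : ℝ) := by
    rw [Finset.sum_congr rfl (fun k hk => (sum_weights c R k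
      (by have := Finset.mem_Ioc.1 hk; omega) hR).symm), Finset.sum_comm]
    apply Finset.sum_congr rfl
    intro d _
    rw [← Finset.sum_filter]
    have : (Finset.Ioc b n).filter (fun k => k ≤ d) = Finset.Ioc b (min d n) := by
      ext k; simp only [Finset.mem_filter, Finset.mem_Ioc]; omega
    rw [this, Finset.sum_const, Nat.card_Ioc, nsmul_eq_mul, mul_comm]
    congr 1
    have : (((min d n - b : ℕ) : ℤ) : ℝ) = ((max ((min d n : ℤ) - b) 0 : ℤ) : ℝ) := by
      congr 1; omega
    rw [← this]; simp
  rw [h1, ← Finset.sum_add_distrib]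
  apply Finset.sum_le_sum
  intro d _
  rw [← mul_add]
  apply mul_le_mul_of_nonneg_left
  · have := hostPairs_remove d v p hp
    rw [hb] at this
    exact_mod_cast this
  · linarith [hc (Nat.le_succ d)]

/-- Number of points of the sequence at height `l`. -/
def cnt {N : ℕ} (v : Fin N → ℕ) (l : ℕ) : ℕ := ∑ i, if v i = l then 1 else 0

lemma cnt_remove {n : ℕ} (v : Fin (n + 1) → ℕ) (p : Fin (n + 1)) (l : ℕ) :
    cnt v l = (if v p = l then 1 else 0) + cnt (v ∘ p.succAbove) l := by
  unfold cnt
  rw [Fin.sum_univ_succAbove _ p]; rfl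

lemma cnt_pos {N : ℕ} (v : Fin N → ℕ) (l : ℕ) : 0 < cnt v l ↔ ∃ i, v i = l := by
  unfold cnt
  rw [Finset.sum_boole]
  simp [Finset.card_pos, Finset.filter_nonempty_iff]

lemma cnt_le {N : ℕ} (v : Fin N → ℕ) (l : ℕ) : cnt v l ≤ N := by
  unfold cnt
  rw [Finset.sum_boole]
  simpa using Finset.card_filter_le (Finset.univ : Finset (Fin N)) (fun i => v i = l)

lemma cnt_add_le {N : ℕ} (v : Fin N → ℕ) (l : ℕ) : cnt v l + cnt v (l + 1) ≤ N := by
  unfold cnt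
  rw [← Finset.sum_add_distrib]
  calc _ ≤ ∑ i : Fin N, 1 := by
        apply Finset.sum_le_sum; intro i _; split_ifs <;> omega
    _ = N := by simp

/-- Lower bound for the energy in terms of the sizes of the level sets, when no height is skipped;
it is obtained by removing maximal points one at a time. The increment
`log (b + 1) - log b ≤ 1 / b` matches the telescoping sum of the weights `1 / (k (k - 1))`. -/
lemma energy_lower (c : ℕ → ℝ) (hc : Antitone c) (R : ℕ) (hR : c R = 0)
    (hck : ∀ k, 2 ≤ k → k < R → c k = 1 / ((k : ℝ) * (k - 1))) (hc0 : ∀ k, 0 ≤ c k) (L : ℕ) :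
    ∀ (N : ℕ), N ≤ R → ∀ (v : Fin N → ℕ), (∀ i, v i ≤ L) →
      (∀ l, 0 < cnt v (l + 1) → 0 < cnt v l) →
      ∑ l ∈ Finset.range L, (Real.log (cnt v l + cnt v (l + 1)) - Real.log (cnt v l))
        - ∑ r ∈ Finset.Ico (cnt v 0) N, 1 / (r : ℝ) ≤ energy c v := by
  intro N
  induction N with
  | zero =>
    intro _ v _ _
    simp [cnt, energy]
  | succ n ih =>
    intro hN v hvL hgap
    obtain ⟨p, hp⟩ := Finite.exists_max v
    rcases Nat.eq_zero_or_pos (v p) with h0 | h0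
    · have hz : ∀ i, v i = 0 := fun i => Nat.le_zero.1 (h0 ▸ hp i)
      have hcz : ∀ l, cnt v (l + 1) = 0 := by
        intro l; simp [cnt, hz]
      have hc00 : cnt v 0 = n + 1 := by simp [cnt, hz]
      rw [hc00]
      simp only [hcz]
      simpa using energy_nonneg hc0 v
    · obtain ⟨q, hq⟩ : ∃ q, v p = q + 1 := ⟨v p - 1, by omega⟩
      have hqL : q < L := by have := hvL p; omega
      set v' := v ∘ p.succAbove with hv'
      have hcnt : ∀ l, l ≠ q + 1 → cnt v l = cnt v' l := by
        intro l hl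
        rw [cnt_remove v p l, if_neg (by rw [hq]; exact fun h => hl h.symm), zero_add]
      have hcntq : cnt v (q + 1) = cnt v' (q + 1) + 1 := by
        rw [cnt_remove v p (q+1), if_pos hq, add_comm]
      have htop : ∀ l, q + 1 < l → cnt v l = 0 := by
        intro l hl
        by_contra h
        obtain ⟨i, hi⟩ := (cnt_pos v l).1 (Nat.pos_of_ne_zero h)
        have := hp i
        omega
      have hgap' : ∀ l, 0 < cnt v' (l + 1) → 0 < cnt v' l := by
        intro l hl
        rcases lt_trichotomy (l + 1) (q + 1) with h | h | h
        · rw [← hcnt _ (by omega)] at hl ⊢; exact hgap l hl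
        · rw [← hcnt _ (by omega)]
          have : l = q := by omega
          subst this
          exact hgap _ (by omega)
        · rw [← hcnt _ (by omega), htop _ h] at hl; omega
      have hih := ih (by omega) v' (fun i => hvL _) hgap'
      have hqpos : 0 < cnt v q := hgap q (by omega)
      set b := cnt v q + cnt v' (q + 1) with hbdef
      have hbn : b ≤ n := by
        have := cnt_add_le v' q
        rw [← hcnt q (by omega)] at this
        exact this
      have hb : ∑ i : Fin n, (if Hostile (v p) (v (p.succAbove i)) then (0 : ℤ) else 1) = b := by
        rw [hbdef, hcnt q (by omega)]
        unfold cnt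
        rw [← Finset.sum_add_distrib]
        push_cast
        apply Finset.sum_congr rfl
        intro i _
        have := hp (p.succAbove i)
        have e : v' i = v (p.succAbove i) := rfl
        rw [e]
        unfold Hostile
        split_ifs <;> omega
      have hrem := energy_remove c hc R hR hN v p hp b hb
      have hb1 : (1 : ℝ) ≤ b := by exact_mod_cast (by omega : 1 ≤ b)
      have hsum : ∑ k ∈ Finset.Ioc b n, c k = 1 / (b : ℝ) - 1 / n := by
        have : ∀ m, b ≤ m → m < R → ∑ k ∈ Finset.Ioc b m, c k = 1 / (b : ℝ) - 1 / m := by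
          intro m hm
          induction m, hm using Nat.le_induction with
          | base => intro _; simp
          | succ m hm ihm =>
            intro hmR
            rw [← Finset.sum_Ioc_consecutive _ hm (Nat.le_succ m), ihm (by omega)]
            simp only [Nat.Ioc_succ_singleton, Finset.sum_singleton]
            rw [hck _ (by omega) hmR]
            have : (1 : ℝ) ≤ m := hb1.trans (by exact_mod_cast hm)
            have hm0 : (m : ℝ) ≠ 0 := by positivity
            push_cast
            rw [add_sub_cancel_right]
            field_simp
            ring
        exact this n hbn (by omega)
      have hlog : Real.log ((b : ℝ) + 1) - Real.log b ≤ 1 / (b : ℝ) := by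
        rw [← Real.log_div (by positivity) (by positivity)]
        have := Real.log_le_sub_one_of_pos (x := ((b : ℝ) + 1) / b) (by positivity)
        have e : ((b : ℝ) + 1) / b - 1 = 1 / b := by field_simp; ring
        linarith
      have hterm : ∑ l ∈ Finset.range L, (Real.log (cnt v l + cnt v (l + 1)) - Real.log (cnt v l))
          = ∑ l ∈ Finset.range L, (Real.log (cnt v' l + cnt v' (l + 1)) - Real.log (cnt v' l))
            + (Real.log ((b : ℝ) + 1) - Real.log b) := by
        have : Real.log ((b : ℝ) + 1) - Real.log b = ∑ l ∈ Finset.range L,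
            if l = q then Real.log ((b : ℝ) + 1) - Real.log b else 0 := by
          rw [Finset.sum_ite_eq' , if_pos (Finset.mem_range.2 hqL)]
        rw [this, ← Finset.sum_add_distrib]
        apply Finset.sum_congr rfl
        intro l _
        rcases eq_or_ne l q with h | h
        · subst h
          rw [if_pos rfl, hcntq, ← hcnt l (by omega), hbdef]
          push_cast
          rw [← add_assoc]; ring
        · rw [if_neg h]
          rcases eq_or_ne l (q + 1) with h' | h'
          · rw [h', ← hcnt (q + 1 + 1) (by omega), htop (q + 1 + 1) (by omega)]
            simp
          · rw [hcnt l h', hcnt (l + 1) (by omega)]; simp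
      have h00 : cnt v 0 = cnt v' 0 := hcnt 0 (by omega)
      have hr : ∑ r ∈ Finset.Ico (cnt v 0) (n + 1), 1 / (r : ℝ)
          = ∑ r ∈ Finset.Ico (cnt v' 0) n, 1 / (r : ℝ) + 1 / n := by
        rw [h00, Finset.sum_Ico_succ_top (cnt_le v' 0)]
      rw [hterm, hr]
      linarith

/-! ### Sequences with prescribed extreme heights -/

/-- Weights asymptotic to `1 / k ^ 2` and summable in closed form. The weight `K` of adjacent
positions is free, and will be taken large to penalise skipped heights. -/
noncomputable def wt (K : ℝ) (k : ℕ) : ℝ := if k ≤ 1 then K else 1 / ((k : ℝ) * (k - 1))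

lemma wt_le_aux {k : ℕ} (hk : 2 ≤ k) : 0 < 1 / ((k : ℝ) * (k - 1)) ∧ 1 / ((k : ℝ) * (k - 1)) ≤ 1 := by
  have h2 : (2 : ℝ) ≤ k := by exact_mod_cast hk
  have : (1 : ℝ) ≤ (k : ℝ) * (k - 1) := by nlinarith
  exact ⟨by positivity, by rw [div_le_one (by linarith)]; exact this⟩

lemma wt_nonneg {K : ℝ} (hK : 1 ≤ K) (k : ℕ) : 0 ≤ wt K k := by
  unfold wt
  split_ifs with h
  · linarith
  · exact (wt_le_aux (by omega)).1.le

lemma wt_trunc_antitone {K : ℝ} (hK : 1 ≤ K) (R : ℕ) :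
    Antitone (fun k => if k < R then wt K k else 0) := by
  apply antitone_nat_of_succ_le
  intro k
  by_cases h1 : k + 1 < R
  · rw [if_pos h1, if_pos (by omega)]
    unfold wt
    split_ifs with h2 h3 h3
    · exact le_rfl
    · omega
    · exact (wt_le_aux (by omega)).2.trans hK
    · have h2 : (2 : ℝ) ≤ k := by exact_mod_cast (by omega : 2 ≤ k)
      push_cast
      apply one_div_le_one_div_of_le
      · nlinarith
      · nlinarith
  · rw [if_neg h1]
    split_ifs
    · exact wt_nonneg hK k
    · exact le_rfl

lemma sum_one_div_le {m N : ℕ} (hm : 1 ≤ m) (hN : m ≤ N) :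
    ∑ r ∈ Finset.Ico m (N + 1), 1 / (r : ℝ) ≤ 1 + (Real.log N - Real.log m) := by
  induction N, hN using Nat.le_induction with
  | base =>
    simp only [Nat.Ico_succ_singleton, Finset.sum_singleton, sub_self, add_zero]
    have : (1 : ℝ) ≤ m := by exact_mod_cast hm
    rw [div_le_one (by linarith)]; exact this
  | succ N hN ih =>
    rw [Finset.sum_Ico_succ_top (by omega)]
    have hN1 : (1 : ℝ) ≤ N := by exact_mod_cast hm.trans hN
    have := Real.one_sub_inv_le_log_of_pos (x := ((N : ℝ) + 1) / N) (by positivity)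
    rw [Real.log_div (by positivity) (by positivity)] at this
    have e : 1 - (((N : ℝ) + 1) / N)⁻¹ = 1 / ((N : ℝ) + 1) := by field_simp; ring
    push_cast
    linarith

lemma exists_change (P : ℕ → Prop) {x y : ℕ} (hxy : x ≤ y) (h : ¬ (P x ↔ P y)) :
    ∃ k, x ≤ k ∧ k < y ∧ ¬ (P k ↔ P (k + 1)) := by
  by_contra! hc
  apply h
  induction y, hxy using Nat.le_induction with
  | base => rfl
  | succ n hn ih =>
    rw [← hc n hn (by omega)]
    by_contra h'
    exact h' (ih h' (fun k h1 h2 => hc k h1 (by omega)))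

/-- A skipped height forces a hostile pair of adjacent points. -/
lemma exists_adjacent {N : ℕ} (v : Fin N → ℕ) (l : ℕ) (hl : ∀ i, v i ≠ l) (x y : Fin N)
    (hx : v x < l) (hy : l < v y) :
    ∃ i j : Fin N, (j : ℕ) = i + 1 ∧ Hostile (v i) (v j) := by
  set P : ℕ → Prop := fun k => ∃ h : k < N, v ⟨k, h⟩ < l with hP
  have hPx : P x := ⟨x.2, hx⟩
  have hPy : ¬ P y := fun ⟨_, h⟩ => by simp at h; omega
  have : ∃ k, k + 1 < N ∧ ¬ (P k ↔ P (k + 1)) := by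
    rcases le_total (x : ℕ) y with h | h
    · obtain ⟨k, h1, h2, h3⟩ := exists_change P h (by tauto)
      exact ⟨k, by omega, h3⟩
    · obtain ⟨k, h1, h2, h3⟩ := exists_change P h (by tauto)
      exact ⟨k, by omega, h3⟩
  obtain ⟨k, hk, hne⟩ := this
  refine ⟨⟨k, by omega⟩, ⟨k + 1, hk⟩, rfl, ?_⟩
  have e1 : P k ↔ v ⟨k, by omega⟩ < l := ⟨fun ⟨_, h⟩ => h, fun h => ⟨_, h⟩⟩
  have e2 : P (k + 1) ↔ v ⟨k + 1, hk⟩ < l := ⟨fun ⟨_, h⟩ => h, fun h => ⟨_, h⟩⟩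
  have h1 := hl ⟨k, by omega⟩
  have h2 := hl ⟨k + 1, hk⟩
  rw [e1, e2] at hne
  unfold Hostile
  omega

/-- If the heights go from `0` to `n`, both extreme heights being taken on a proportion `κ` of the
points, then the energy is at least `n log 2` up to a constant depending on `κ` only. -/
lemma energy_heights {K κ : ℝ} {n N : ℕ} (hK : 1 ≤ K) (hKn : n * Real.log 2 ≤ K) (hκ : 0 < κ)
    (hN : 1 ≤ N) (v : Fin N → ℕ) (hv : ∀ i, v i ≤ n) (h0 : κ * N ≤ cnt v 0)
    (hn : κ * N ≤ cnt v n) :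
    n * Real.log 2 - 1 + Real.log κ ≤ energy (wt K) v := by
  have hN1 : (1 : ℝ) ≤ N := by exact_mod_cast hN
  have hNp : (0 : ℝ) < N := by linarith
  have hκ1 : κ ≤ 1 := by
    have : (cnt v 0 : ℝ) ≤ N := by exact_mod_cast cnt_le v 0
    by_contra h
    push Not at h
    nlinarith
  have hlogκ : Real.log κ ≤ 0 := Real.log_nonpos hκ.le hκ1
  have h0p : 0 < cnt v 0 := by
    have : (0 : ℝ) < cnt v 0 := lt_of_lt_of_le (by positivity) h0
    exact_mod_cast this
  have hnp : 0 < cnt v n := by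
    have : (0 : ℝ) < cnt v n := lt_of_lt_of_le (by positivity) hn
    exact_mod_cast this
  by_cases hgap : ∀ l, 0 < cnt v (l + 1) → 0 < cnt v l
  · set c : ℕ → ℝ := fun k => if k < N + 1 then wt K k else 0 with hc
    have hE : energy c v = energy (wt K) v := by
      unfold energy
      refine Finset.sum_congr rfl fun i _ => Finset.sum_congr rfl fun j _ => ?_
      rw [hc]
      dsimp only
      rw [if_pos (show (j : ℕ) - i < N + 1 by omega)]
    have hlow := energy_lower c (wt_trunc_antitone hK (N + 1)) (N + 1) (by simp [hc])
      (fun k h2 hk => by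
        rw [hc]; dsimp only; rw [if_pos hk]; unfold wt; rw [if_neg (by omega)])
      (fun k => by
        rw [hc]; dsimp only
        split_ifs
        · exact wt_nonneg hK k
        · exact le_rfl) n N (by omega) v hv hgap
    rw [hE] at hlow
    have hpos : ∀ l ≤ n, 0 < cnt v l := by
      intro l hl
      induction hl using Nat.decreasingInduction with
      | self => exact hnp
      | of_succ k hk ih => exact hgap k ih
    have hsum : (n : ℝ) * Real.log 2 + (1 / 2) * (Real.log (cnt v n) - Real.log (cnt v 0))
        ≤ ∑ l ∈ Finset.range n, (Real.log (cnt v l + cnt v (l + 1)) - Real.log (cnt v l)) := by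
      rw [← Finset.sum_range_sub (fun l => Real.log (cnt v l)) n, Finset.mul_sum]
      have : (n : ℝ) * Real.log 2 = ∑ l ∈ Finset.range n, Real.log 2 := by simp
      rw [this, ← Finset.sum_add_distrib]
      apply Finset.sum_le_sum
      intro l hl
      have hl := Finset.mem_range.1 hl
      have a0 : (0 : ℝ) < cnt v l := by exact_mod_cast hpos l hl.le
      have b0 : (0 : ℝ) < cnt v (l + 1) := by exact_mod_cast hpos (l + 1) hl
      set a : ℝ := ((cnt v l : ℕ) : ℝ)
      set b : ℝ := ((cnt v (l + 1) : ℕ) : ℝ)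
      -- arithmetic-geometric mean inequality, `4 a b ≤ (a + b) ^ 2`
      have h4 : Real.log (2 * 2 * (a * b)) ≤ Real.log ((a + b) * (a + b)) :=
        Real.log_le_log (by positivity) (by nlinarith [sq_nonneg (a - b)])
      rw [Real.log_mul (by positivity) (by positivity), Real.log_mul (by positivity) (by positivity),
        Real.log_mul (by positivity) (by positivity),
        Real.log_mul (by positivity) (by positivity)] at h4
      linarith
    have hharm : ∑ r ∈ Finset.Ico (cnt v 0) N, 1 / (r : ℝ)
        ≤ 1 + (Real.log N - Real.log (cnt v 0)) := by
      refine le_trans ?_ (sum_one_div_le h0p (cnt_le v 0))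
      rw [Finset.sum_Ico_succ_top (cnt_le v 0)]
      have : (0 : ℝ) ≤ 1 / N := by positivity
      linarith
    have l0 : Real.log κ + Real.log N ≤ Real.log (cnt v 0) := by
      rw [← Real.log_mul (by positivity) (by positivity)]
      exact Real.log_le_log (by positivity) h0
    have ln : Real.log κ + Real.log N ≤ Real.log (cnt v n) := by
      rw [← Real.log_mul (by positivity) (by positivity)]
      exact Real.log_le_log (by positivity) hn
    linarith
  · push Not at hgap
    obtain ⟨l, hl1, hl2⟩ := hgap
    obtain ⟨y, hy⟩ := (cnt_pos v (l + 1)).1 hl1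
    obtain ⟨x, hx⟩ := (cnt_pos v 0).1 h0p
    have hl0 : l ≠ 0 := by rintro rfl; omega
    have hnl : ∀ i, v i ≠ l := by
      intro i hi
      have := (cnt_pos v l).2 ⟨i, hi⟩
      omega
    obtain ⟨i, j, hij, hh⟩ := exists_adjacent v l hnl x y (by omega) (by omega)
    have hlt : i < j := by rw [Fin.lt_def]; omega
    have hterm : ∀ i j : Fin N, 0 ≤ if i < j ∧ Hostile (v i) (v j) then wt K (j - i) else 0 := by
      intro i j
      split_ifs
      · exact wt_nonneg hK _
      · exact le_rfl
    have : K ≤ energy (wt K) v := by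
      calc K = if i < j ∧ Hostile (v i) (v j) then wt K (j - i) else 0 := by
            rw [if_pos ⟨hlt, hh⟩, hij, Nat.add_sub_cancel_left]; simp [wt]
        _ ≤ ∑ j : Fin N, if i < j ∧ Hostile (v i) (v j) then wt K (j - i) else 0 :=
            Finset.single_le_sum (f := fun j => if i < j ∧ Hostile (v i) (v j) then wt K (j - i)
              else 0) (fun j _ => hterm i j) (Finset.mem_univ j)
        _ ≤ energy (wt K) v :=
            Finset.single_le_sum (f := fun i => ∑ j : Fin N,
              if i < j ∧ Hostile (v i) (v j) then wt K (j - i) else 0)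
              (fun i _ => Finset.sum_nonneg fun j _ => hterm i j) (Finset.mem_univ i)
    linarith

/-! ### From integer to real sequences -/

/-- Shifts `σ` for which the integer parts of `a + σ` and `b + σ` are at distance at least `2`. -/
def farShift (a b : ℝ) : Set ℝ := {σ | 2 ≤ |⌊a + σ⌋ - ⌊b + σ⌋|}

lemma measurableSet_farShift (a b : ℝ) : MeasurableSet (farShift a b) := by
  have : Measurable (fun σ : ℝ => |⌊a + σ⌋ - ⌊b + σ⌋|) := by
    have h1 : Measurable (fun σ : ℝ => ⌊a + σ⌋) := by fun_prop
    have h2 : Measurable (fun σ : ℝ => ⌊b + σ⌋) := by fun_prop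
    exact (measurable_of_countable (fun p : ℤ × ℤ => |p.1 - p.2|)).comp (h1.prodMk h2)
  exact measurableSet_le measurable_const this

lemma theta_nonneg (t : ℝ) : 0 ≤ theta t := le_min zero_le_one (le_max_right _ _)

lemma theta_le_one (t : ℝ) : theta t ≤ 1 := min_le_left _ _

lemma integral_farShift_le_aux (b d : ℝ) (hd : 0 ≤ d) :
    ∫ σ in (0 : ℝ)..1, (farShift (b + d) b).indicator (fun _ => (1 : ℝ)) σ ≤ theta d := by
  have e1 : ∀ σ, (farShift (b + d) b).indicator (fun _ => (1 : ℝ)) σ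
      = (farShift d 0).indicator (fun _ => (1 : ℝ)) (b + σ) := by
    intro σ
    have : σ ∈ farShift (b + d) b ↔ b + σ ∈ farShift d 0 := by
      simp only [farShift, Set.mem_ofPred_eq, zero_add]
      rw [show b + d + σ = d + (b + σ) by ring]
    by_cases h : σ ∈ farShift (b + d) b
    · rw [indicator_of_mem h, indicator_of_mem (this.1 h)]
    · rw [indicator_of_notMem h, indicator_of_notMem (fun h' => h (this.2 h'))]
  have hper : Function.Periodic ((farShift d 0).indicator (fun _ => (1 : ℝ))) 1 := by
    intro x
    have : x + 1 ∈ farShift d 0 ↔ x ∈ farShift d 0 := by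
      simp only [farShift, Set.mem_ofPred_eq, zero_add]
      rw [← add_assoc, Int.floor_add_one, Int.floor_add_one]
      simp
    by_cases h : x ∈ farShift d 0
    · rw [indicator_of_mem h, indicator_of_mem (this.2 h)]
    · rw [indicator_of_notMem h, indicator_of_notMem (fun h' => h (this.1 h'))]
  simp_rw [e1]
  rw [intervalIntegral.integral_comp_add_left (fun x => (farShift d 0).indicator
    (fun _ => (1 : ℝ)) x), add_zero, hper.intervalIntegral_add_eq b 0, zero_add,
    intervalIntegral.integral_of_le zero_le_one, integral_indicator_const _
    (measurableSet_farShift d 0), smul_eq_mul, mul_one,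
    measureReal_restrict_apply (measurableSet_farShift d 0)]
  have hsub : farShift d 0 ∩ Ioc 0 1 ⊆ Icc (max 0 (2 - d)) 1 := by
    rintro x ⟨hx, h0, h1⟩
    refine ⟨max_le h0.le ?_, h1⟩
    simp only [farShift, Set.mem_ofPred_eq, zero_add] at hx
    have hx0 : 0 ≤ ⌊x⌋ := Int.floor_nonneg.2 h0.le
    have hmono : ⌊x⌋ ≤ ⌊d + x⌋ := Int.floor_mono (by linarith)
    rw [abs_of_nonneg (by linarith)] at hx
    have h2 : (2 : ℤ) ≤ ⌊d + x⌋ := by linarith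
    have h3 : ((2 : ℤ) : ℝ) ≤ d + x := Int.le_floor.1 h2
    push_cast at h3
    linarith
  calc volume.real (farShift d 0 ∩ Ioc 0 1) ≤ volume.real (Icc (max 0 (2 - d)) 1) :=
        measureReal_mono hsub (by simp)
    _ = max (1 - max 0 (2 - d)) 0 := by rw [Real.volume_real_Icc]
    _ = theta d := by
        unfold theta
        rcases le_total 0 (2 - d) with h | h
        · rw [max_eq_right h, min_eq_right (max_le (by linarith) zero_le_one)]
          congr 1; ring
        · rw [max_eq_left h, min_eq_left (le_max_of_le_left (by linarith))]; simp

/-- A uniform random shift puts the integer parts of two reals at distance at least `2` with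
probability at most `θ` of their distance. -/
lemma integral_farShift_le (a b : ℝ) :
    ∫ σ in (0 : ℝ)..1, (farShift a b).indicator (fun _ => (1 : ℝ)) σ ≤ theta |a - b| := by
  rcases le_total b a with h | h
  · have := integral_farShift_le_aux b (a - b) (by linarith)
    rw [abs_of_nonneg (by linarith)]
    simpa using this
  · have := integral_farShift_le_aux a (b - a) (by linarith)
    rw [abs_sub_comm, abs_of_nonneg (by linarith)]
    have e : farShift a b = farShift b a := by
      unfold farShift; ext σ; simp only [Set.mem_ofPred_eq]; rw [abs_sub_comm]
    rw [e]
    simpa using this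

/-- Discrete lower bound for `θ`: a sequence of reals that is below `A` and above `B` on a
proportion `κ` of its points, with `B - A ≥ n + 1`. -/
lemma energy_theta {K κ A B : ℝ} {n N : ℕ} (hK : 1 ≤ K) (hKn : n * Real.log 2 ≤ K) (hκ : 0 < κ)
    (hN : 1 ≤ N) (hn : 1 ≤ n) (hAB : A + n + 1 ≤ B) (z : Fin N → ℝ)
    (hA : κ * N ≤ ∑ i : Fin N, if z i ≤ A then (1 : ℝ) else 0)
    (hB : κ * N ≤ ∑ i : Fin N, if B ≤ z i then (1 : ℝ) else 0) :
    n * Real.log 2 - 1 + Real.log κ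
      ≤ ∑ i : Fin N, ∑ j : Fin N, if i < j then wt K (j - i) * theta |z j - z i| else 0 := by
  set G : Fin N → Fin N → ℝ → ℝ := fun i j σ =>
    if i < j then wt K (j - i) * (farShift (z j) (z i)).indicator (fun _ => (1 : ℝ)) σ else 0
    with hG
  have h_int : ∀ i j, IntervalIntegrable (G i j) volume 0 1 := by
    intro i j
    rw [hG]
    by_cases h : i < j
    · simp only [h, if_true]
      apply IntervalIntegrable.const_mul
      rw [intervalIntegrable_iff_integrableOn_Ioc_of_le zero_le_one]
      exact (integrable_const (1 : ℝ)).indicator (measurableSet_farShift _ _)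
    · simp only [h, if_false]
      exact intervalIntegrable_const
  have hint2 : ∀ i, IntervalIntegrable (fun σ => ∑ j, G i j σ) volume 0 1 := by
    intro i
    have := IntervalIntegrable.sum Finset.univ (fun j _ => h_int i j)
    refine this.congr (fun σ _ => ?_)
    simp
  have hint3 : IntervalIntegrable (fun σ => ∑ i, ∑ j, G i j σ) volume 0 1 := by
    have := IntervalIntegrable.sum Finset.univ (fun i _ => hint2 i)
    refine this.congr (fun σ _ => ?_)
    simp
  have hpt : ∀ σ : ℝ, n * Real.log 2 - 1 + Real.log κ ≤ ∑ i, ∑ j, G i j σ := by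
    intro σ
    set v : Fin N → ℕ := fun i => min (⌊z i + σ⌋ - ⌊A + σ⌋).toNat n with hv
    have hf : (n : ℤ) ≤ ⌊B + σ⌋ - ⌊A + σ⌋ := by
      have h1 := Int.lt_floor_add_one (B + σ)
      have h2 := Int.floor_le (A + σ)
      have : ((n : ℤ) : ℝ) < ((⌊B + σ⌋ - ⌊A + σ⌋ + 1 : ℤ) : ℝ) := by push_cast; linarith
      have := Int.cast_lt.1 this
      omega
    have h0 : κ * N ≤ cnt v 0 := by
      refine hA.trans ?_
      unfold cnt
      push_cast
      apply Finset.sum_le_sum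
      intro i _
      by_cases h : z i ≤ A
      · have : ⌊z i + σ⌋ ≤ ⌊A + σ⌋ := Int.floor_mono (by linarith)
        rw [if_pos h, if_pos (by simp only [hv]; omega)]
      · rw [if_neg h]; split_ifs <;> norm_num
    have h1 : κ * N ≤ cnt v n := by
      refine hB.trans ?_
      unfold cnt
      push_cast
      apply Finset.sum_le_sum
      intro i _
      by_cases h : B ≤ z i
      · have : ⌊B + σ⌋ ≤ ⌊z i + σ⌋ := Int.floor_mono (by linarith)
        rw [if_pos h, if_pos (by simp only [hv]; omega)]
      · rw [if_neg h]; split_ifs <;> norm_num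
    refine (energy_heights hK hKn hκ hN v (fun i => min_le_right _ _) h0 h1).trans ?_
    unfold energy
    apply Finset.sum_le_sum
    intro i _
    apply Finset.sum_le_sum
    intro j _
    rw [hG]
    by_cases hij : i < j
    · simp only [hij, true_and, if_true]
      by_cases hh : Hostile (v i) (v j)
      · rw [if_pos hh, indicator_of_mem, mul_one]
        simp only [farShift, Set.mem_ofPred_eq]
        unfold Hostile at hh
        simp only [hv] at hh
        rw [le_abs]
        omega
      · rw [if_neg hh]
        exact mul_nonneg (wt_nonneg hK _) (indicator_nonneg (fun _ _ => zero_le_one) _)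
    · simp [hij]
  calc n * Real.log 2 - 1 + Real.log κ
      = ∫ σ in (0 : ℝ)..1, (n * Real.log 2 - 1 + Real.log κ) := by simp
    _ ≤ ∫ σ in (0 : ℝ)..1, ∑ i, ∑ j, G i j σ :=
        intervalIntegral.integral_mono_on zero_le_one intervalIntegrable_const hint3
          (fun σ _ => hpt σ)
    _ = ∑ i, ∑ j, ∫ σ in (0 : ℝ)..1, G i j σ := by
        rw [intervalIntegral.integral_finsetSum (fun i _ => hint2 i)]
        apply Finset.sum_congr rfl
        intro i _
        rw [intervalIntegral.integral_finsetSum (fun j _ => h_int i j)]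
    _ ≤ _ := by
        apply Finset.sum_le_sum
        intro i _
        apply Finset.sum_le_sum
        intro j _
        rw [hG]
        by_cases hij : i < j
        · simp only [hij, if_true]
          rw [intervalIntegral.integral_const_mul]
          exact mul_le_mul_of_nonneg_left (integral_farShift_le _ _) (wt_nonneg hK _)
        · simp [hij]

/-! ### From lattices to integrals -/

/-- Symmetrisation: the double integral of a symmetric function in terms of increments. -/
lemma lintegral_symm_eq (H : ℝ → ℝ → ℝ≥0∞) (hm : Measurable (Function.uncurry H))
    (hs : ∀ x y, H x y = H y x) :
    ∫⁻ x, ∫⁻ y, H x y = 2 * ∫⁻ h in Ioi 0, ∫⁻ x, H x (x + h) := by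
  have hmu : MeasurableSet {p : ℝ × ℝ | p.1 < p.2} := measurableSet_lt measurable_fst measurable_snd
  have hG : Measurable (Function.uncurry fun x y : ℝ => (Ioi x).indicator (H x) y) := by
    have := hm.indicator hmu
    convert this using 1
    ext ⟨x, y⟩
    by_cases h : x < y
    · simp [h]
    · simp [h]
  have h1 : ∀ x, ∫⁻ y, H x y = (∫⁻ y, (Ioi x).indicator (H x) y)
      + ∫⁻ y, (Ioi y).indicator (H y) x := by
    intro x
    have hGx : Measurable (fun y => (Ioi x).indicator (H x) y) := hG.comp measurable_prodMk_left
    rw [← lintegral_add_left hGx]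
    apply lintegral_congr_ae
    have : ∀ᵐ y : ℝ, y ≠ x := by simp [ae_iff, measure_singleton]
    filter_upwards [this] with y hy
    rcases lt_or_gt_of_ne hy with h | h
    · simp [h, h.le, hs x y]
    · simp [h, h.le]
  have hsw : ∫⁻ x, ∫⁻ y, (Ioi y).indicator (H y) x = ∫⁻ x, ∫⁻ y, (Ioi x).indicator (H x) y := by
    rw [lintegral_lintegral_swap]
    exact (hG.comp measurable_swap).aemeasurable
  simp_rw [h1]
  rw [lintegral_add_left, hsw, ← two_mul]
  · congr 1
    have h2 : ∀ x, ∫⁻ y, (Ioi x).indicator (H x) y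
        = ∫⁻ h, (Ioi 0).indicator (fun h => H x (x + h)) h := by
      intro x
      rw [← lintegral_add_left_eq_self _ x]
      apply lintegral_congr
      intro h
      by_cases hh : 0 < h
      · simp [hh]
      · simp [hh]
    simp_rw [h2]
    rw [lintegral_lintegral_swap, ← lintegral_indicator measurableSet_Ioi]
    · apply lintegral_congr
      intro h
      by_cases hh : 0 < h
      · simp [hh]
      · simp [hh]
    · have : Measurable (fun p : ℝ × ℝ => (p.1, p.1 + p.2)) := by fun_prop
      have := (hG.comp this)
      refine Measurable.aemeasurable ?_
      convert this using 1
      ext ⟨x, h⟩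
      by_cases hh : 0 < h
      · simp [hh]
      · simp [hh]
  · exact hG.lintegral_prod_right'

/-- The weights `m * wt K m` summed over a window of ratio `b / a` are `log (b / a)` up to a
constant: this makes `wt K` an admissible discretisation of the kernel `1 / h ^ 2`. -/
lemma sum_wt_bound {K a b h : ℝ} (hK : 1 ≤ K) (ha : 0 < a) (hab : a < b) (hh : 0 < h) (n : ℕ) :
    ∑ k ∈ Finset.range n, (if ((k : ℝ) + 1) * a < h ∧ h < (k + 1) * b
        then ((k : ℝ) + 1) * wt K (k + 1) else 0) ≤ K + 2 + Real.log (b / a) := by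
  have hb : 0 < b := ha.trans hab
  have e0 : ∀ k : ℕ, 1 ≤ k → ((k : ℝ) + 1) * wt K (k + 1) = 1 / k := by
    intro k hk
    have : (0 : ℝ) < k := by exact_mod_cast hk
    unfold wt
    rw [if_neg (by omega)]
    push_cast
    rw [add_sub_cancel_right]
    field_simp
  have e1 : ∀ n : ℕ, ∑ k ∈ Finset.range n, (((k : ℝ) + 1) * wt K (k + 1) - 1 / (k + 1))
      ≤ K - 1 / n := by
    intro n
    induction n with
    | zero => simp; linarith
    | succ n ih =>
      rw [Finset.sum_range_succ]
      rcases Nat.eq_zero_or_pos n with h0 | h0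
      · subst h0; simp [wt]
      · rw [e0 n h0]
        push_cast
        linarith
  have e2 : ∀ k : ℕ, 0 ≤ ((k : ℝ) + 1) * wt K (k + 1) - 1 / (k + 1) := by
    intro k
    rcases Nat.eq_zero_or_pos k with h0 | h0
    · subst h0; simp [wt]; linarith
    · rw [e0 k h0]
      have : (0 : ℝ) < k := by exact_mod_cast h0
      have := one_div_le_one_div_of_le this (show (k : ℝ) ≤ k + 1 by linarith)
      linarith
  set P : ℕ → Prop := fun k => ((k : ℝ) + 1) * a < h ∧ h < (k + 1) * b with hP
  have e3 : ∑ k ∈ Finset.range n, (if P k then 1 / ((k : ℝ) + 1) else 0)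
      ≤ 1 + Real.log (b / a) := by
    set m := ⌊h / b⌋₊ + 1 with hm
    set N := ⌊h / a⌋₊ with hN
    rw [← Finset.sum_filter]
    have hlog : 0 ≤ Real.log (b / a) := Real.log_nonneg (by rw [le_div_iff₀ ha]; linarith)
    have hsub : ∀ k ∈ (Finset.range n).filter P, k + 1 ∈ Finset.Ico m (N + 1) := by
      intro k hk
      obtain ⟨h1, h2⟩ := (Finset.mem_filter.1 hk).2
      rw [Finset.mem_Ico]
      constructor
      · rw [hm]
        have : ⌊h / b⌋₊ < k + 1 := by
          rw [Nat.floor_lt (by positivity), div_lt_iff₀ hb]; push_cast; exact h2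
        omega
      · have : k + 1 ≤ N := Nat.le_floor (by rw [le_div_iff₀ ha]; push_cast; exact h1.le)
        omega
    have e4 : ∑ k ∈ (Finset.range n).filter P, 1 / ((k : ℝ) + 1)
        ≤ ∑ r ∈ Finset.Ico m (N + 1), 1 / (r : ℝ) := by
      calc ∑ k ∈ (Finset.range n).filter P, 1 / ((k : ℝ) + 1)
          = ∑ r ∈ ((Finset.range n).filter P).image Nat.succ, 1 / (r : ℝ) := by
            rw [Finset.sum_image (fun x _ y _ hxy => Nat.succ_injective hxy)]
            push_cast [Nat.succ_eq_add_one]; rfl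
        _ ≤ _ := by
            apply Finset.sum_le_sum_of_subset_of_nonneg
            · intro r hr
              obtain ⟨k, hk, rfl⟩ := Finset.mem_image.1 hr
              exact hsub k hk
            · intros; positivity
    refine e4.trans ?_
    rcases le_or_gt m N with hmN | hmN
    · refine (sum_one_div_le (by omega) hmN).trans ?_
      have hm0 : h / b ≤ m := by rw [hm]; push_cast; exact (Nat.lt_floor_add_one _).le
      have hN0 : (N : ℝ) ≤ h / a := Nat.floor_le (by positivity)
      have h1 : Real.log (h / b) ≤ Real.log m := Real.log_le_log (by positivity) hm0
      have h2 : Real.log N ≤ Real.log (h / a) :=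
        Real.log_le_log (by exact_mod_cast (show 0 < N by omega)) hN0
      rw [Real.log_div hh.ne' hb.ne'] at h1
      rw [Real.log_div hh.ne' ha.ne'] at h2
      rw [Real.log_div hb.ne' ha.ne']
      linarith
    · rw [Finset.Ico_eq_empty (by omega)]
      simp; linarith
  calc ∑ k ∈ Finset.range n, (if P k then ((k : ℝ) + 1) * wt K (k + 1) else 0)
      ≤ ∑ k ∈ Finset.range n, ((((k : ℝ) + 1) * wt K (k + 1) - 1 / (k + 1))
          + if P k then 1 / ((k : ℝ) + 1) else 0) := by
        apply Finset.sum_le_sum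
        intro k _
        have := e2 k
        split_ifs <;> linarith
    _ ≤ (K - 1 / n) + (1 + Real.log (b / a)) := by
        rw [Finset.sum_add_distrib]
        exact add_le_add (e1 n) e3
    _ ≤ _ := by
        have : (0 : ℝ) ≤ 1 / n := by positivity
        linarith

lemma lintegral_comp_mul_left_pos {G : ℝ → ℝ≥0∞} (hG : Measurable G) {c : ℝ} (hc : 0 < c) :
    ∫⁻ x, ENNReal.ofReal c * G (c * x) = ∫⁻ x, G x := by
  conv_rhs => rw [← Real.smul_map_volume_mul_left hc.ne']
  rw [lintegral_smul_measure, lintegral_map hG (by fun_prop), lintegral_const_mul _ (by fun_prop),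
    abs_of_pos hc, smul_eq_mul]

/-- If all lattice discretisations of `∫ F h / h ^ 2` with the weights `wt K` are at least `Q`,
then so is the integral: average the lattice bound over the lattice width `ε` against
`dε / ε ^ 2` on long logarithmic ranges. -/
lemma le_lintegral_of_lattice {F : ℝ → ℝ≥0∞} (hF : Measurable F) {K e0 Q : ℝ} (hK : 1 ≤ K)
    (he0 : 0 < e0)
    (hlat : ∀ ε, 0 < ε → ε < e0 → ENNReal.ofReal (ε * Q)
      ≤ ∑' k : ℕ, ENNReal.ofReal (wt K (k + 1)) * F ((k + 1) * ε)) :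
    ENNReal.ofReal Q ≤ ∫⁻ h in Ioi 0, F h * ENNReal.ofReal (1 / h ^ 2) := by
  set T := ∫⁻ h in Ioi 0, F h * ENNReal.ofReal (1 / h ^ 2) with hT
  -- widths ranging over `(b e^{-ℓ}, b)`: the error `K + 2` is negligible against `ℓ` as `ℓ → ∞`
  have hmain : ∀ ℓ : ℝ, 0 < ℓ → ENNReal.ofReal (Q * ℓ) ≤ ENNReal.ofReal (K + 2 + ℓ) * T := by
    intro ℓ hℓ
    set b := e0
    set a := b * Real.exp (-ℓ) with ha_def
    have ha : 0 < a := by positivity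
    have hab : a < b := by
      have : Real.exp (-ℓ) < 1 := by rw [Real.exp_lt_one_iff]; linarith
      nlinarith
    have hlogab : Real.log (b / a) = ℓ := by
      rw [Real.log_div he0.ne' ha.ne', ha_def, Real.log_mul he0.ne' (Real.exp_pos _).ne',
        Real.log_exp]
      ring
    have hL : ENNReal.ofReal (Q * ℓ) ≤ ∫⁻ ε in Ioo a b, ENNReal.ofReal (Q / ε) := by
      rcases le_or_gt Q 0 with hQ | hQ
      · rw [ENNReal.ofReal_of_nonpos (mul_nonpos_of_nonpos_of_nonneg hQ hℓ.le)]
        exact zero_le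
      have hnon : ∀ᵐ x ∂volume.restrict (Ioo a b), 0 ≤ Q / x := by
        filter_upwards [ae_restrict_mem measurableSet_Ioo] with x hx
        exact div_nonneg hQ.le (ha.trans hx.1).le
      have h_int : IntegrableOn (fun x => Q / x) (Ioo a b) := by
        apply (ContinuousOn.integrableOn_Icc (a := a) (b := b) _).mono_set Ioo_subset_Icc_self
        intro x hx
        have : x ≠ 0 := (ha.trans_le hx.1).ne'
        exact (continuousAt_const.div continuousAt_id this).continuousWithinAt
      rw [← ofReal_integral_eq_lintegral_ofReal h_int hnon]
      apply ENNReal.ofReal_le_ofReal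
      rw [← integral_Ioc_eq_integral_Ioo, ← intervalIntegral.integral_of_le hab.le]
      have : ∀ x : ℝ, Q / x = Q * (1 / x) := fun x => by ring
      simp_rw [this]
      rw [intervalIntegral.integral_const_mul, integral_one_div_of_pos ha he0, hlogab]
    have hsub : ∀ k : ℕ, ∫⁻ ε in Ioo a b, F ((k + 1) * ε) * ENNReal.ofReal (1 / ε ^ 2)
        = ENNReal.ofReal (k + 1) * ∫⁻ h in Ioi 0,
          (if ((k : ℝ) + 1) * a < h ∧ h < (k + 1) * b then 1 else 0)
            * (F h * ENNReal.ofReal (1 / h ^ 2)) := by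
      intro k
      have hk : (0 : ℝ) < k + 1 := by positivity
      set G : ℝ → ℝ≥0∞ := fun h => (Ioi 0).indicator (fun h =>
          (if ((k : ℝ) + 1) * a < h ∧ h < (k + 1) * b then 1 else 0)
            * (F h * ENNReal.ofReal (1 / h ^ 2))) h with hG
      have hGm : Measurable G := by
        apply Measurable.indicator _ measurableSet_Ioi
        apply Measurable.mul
        · exact Measurable.ite ((measurableSet_lt measurable_const measurable_id).inter
            (measurableSet_lt measurable_id measurable_const)) measurable_const measurable_const
        · fun_prop
      rw [← lintegral_indicator measurableSet_Ioi]
      change _ = _ * ∫⁻ h, G h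
      rw [← lintegral_comp_mul_left_pos hGm hk, ← lintegral_const_mul _ (by fun_prop),
        ← lintegral_indicator measurableSet_Ioo]
      apply lintegral_congr
      intro ε
      by_cases h : ε ∈ Ioo a b
      · have hε : 0 < ε := ha.trans h.1
        have h1 : (k + 1 : ℝ) * ε ∈ Ioi (0 : ℝ) := mul_pos hk hε
        rw [indicator_of_mem h, hG]
        simp only
        rw [indicator_of_mem h1, if_pos ⟨mul_lt_mul_of_pos_left h.1 hk,
          mul_lt_mul_of_pos_left h.2 hk⟩, one_mul, mul_left_comm (ENNReal.ofReal (k + 1)) (F _),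
          mul_left_comm (ENNReal.ofReal (k + 1)) (F _),
          ← ENNReal.ofReal_mul hk.le, ← ENNReal.ofReal_mul hk.le]
        congr 2
        field_simp
      · rw [indicator_of_notMem h, hG]
        simp only
        have : ¬ (((k : ℝ) + 1) * a < (k + 1) * ε ∧ (k + 1 : ℝ) * ε < (k + 1) * b) := by
          rintro ⟨h1, h2⟩
          exact h ⟨lt_of_mul_lt_mul_left h1 hk.le, lt_of_mul_lt_mul_left h2 hk.le⟩
        by_cases h1 : (k + 1 : ℝ) * ε ∈ Ioi (0 : ℝ)
        · rw [indicator_of_mem h1, if_neg this]; simp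
        · rw [indicator_of_notMem h1]; simp
    calc ENNReal.ofReal (Q * ℓ) ≤ ∫⁻ ε in Ioo a b, ENNReal.ofReal (Q / ε) := hL
      _ ≤ ∫⁻ ε in Ioo a b, ∑' k : ℕ, ENNReal.ofReal (wt K (k + 1))
            * (F ((k + 1) * ε) * ENNReal.ofReal (1 / ε ^ 2)) := by
          apply setLIntegral_mono' measurableSet_Ioo
          intro ε hε
          have hε0 : 0 < ε := ha.trans hε.1
          have := mul_le_mul_left (hlat ε hε0 hε.2) (ENNReal.ofReal (1 / ε ^ 2))
          rw [← ENNReal.ofReal_mul' (by positivity), ← ENNReal.tsum_mul_right] at this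
          convert this using 2
          · field_simp
          · ext k; rw [mul_assoc]
      _ = ∑' k : ℕ, ENNReal.ofReal (wt K (k + 1))
            * ∫⁻ ε in Ioo a b, F ((k + 1) * ε) * ENNReal.ofReal (1 / ε ^ 2) := by
          rw [lintegral_tsum]
          · congr 1; ext k
            rw [lintegral_const_mul]
            fun_prop
          · intro k; fun_prop
      _ = ∫⁻ h in Ioi 0, ∑' k : ℕ, ENNReal.ofReal (if ((k : ℝ) + 1) * a < h ∧ h < (k + 1) * b
            then ((k : ℝ) + 1) * wt K (k + 1) else 0) * (F h * ENNReal.ofReal (1 / h ^ 2)) := by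
          have hmeas : ∀ k : ℕ, Measurable (fun h : ℝ =>
              (if ((k : ℝ) + 1) * a < h ∧ h < (k + 1) * b then (1 : ℝ≥0∞) else 0)) := fun k =>
            Measurable.ite ((measurableSet_lt measurable_const measurable_id).inter
              (measurableSet_lt measurable_id measurable_const)) measurable_const measurable_const
          have hrw : ∀ (k : ℕ) (h : ℝ), ENNReal.ofReal (if ((k : ℝ) + 1) * a < h ∧ h < (k + 1) * b
              then ((k : ℝ) + 1) * wt K (k + 1) else 0) = ENNReal.ofReal (wt K (k + 1))
                * ENNReal.ofReal (k + 1)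
                * (if ((k : ℝ) + 1) * a < h ∧ h < (k + 1) * b then 1 else 0) := by
            intro k h
            split_ifs
            · rw [mul_one, mul_comm, ENNReal.ofReal_mul (wt_nonneg hK _)]
            · simp
          simp_rw [hrw]
          rw [lintegral_tsum]
          · congr 1; ext k
            rw [hsub k, ← mul_assoc, ← lintegral_const_mul]
            · congr 1; ext h; ring
            · exact (hmeas k).mul (by fun_prop)
          · intro k
            exact (((hmeas k).const_mul _).mul (by fun_prop)).aemeasurable
      _ ≤ ∫⁻ h in Ioi 0, ENNReal.ofReal (K + 2 + ℓ) * (F h * ENNReal.ofReal (1 / h ^ 2)) := by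
          apply setLIntegral_mono' measurableSet_Ioi
          intro h hh
          rw [ENNReal.tsum_mul_right]
          gcongr
          apply ENNReal.tsum_le_of_sum_range_le
          intro n
          rw [← ENNReal.ofReal_sum_of_nonneg]
          · apply ENNReal.ofReal_le_ofReal
            rw [← hlogab]
            exact sum_wt_bound hK ha hab hh n
          · intro k _
            have := wt_nonneg hK (k + 1)
            split_ifs <;> positivity
      _ = _ := by
          rw [lintegral_const_mul]
          fun_prop
  by_cases hTtop : T = ⊤
  · rw [hTtop]; exact le_top
  rw [← ENNReal.ofReal_toReal hTtop]
  apply ENNReal.ofReal_le_ofReal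
  by_contra! hlt
  set t := T.toReal
  have ht : 0 ≤ t := ENNReal.toReal_nonneg
  set ℓ := ((K + 2) * t + 1) / (Q - t) with hℓd
  have hQ : 0 < Q - t := by linarith
  have hℓ : 0 < ℓ := by positivity
  have := hmain ℓ hℓ
  rw [← ENNReal.ofReal_toReal hTtop, ← ENNReal.ofReal_mul (by positivity),
    ENNReal.ofReal_le_ofReal_iff (by positivity)] at this
  have h2 : ℓ * (Q - t) = (K + 2) * t + 1 := by rw [hℓd]; field_simp
  nlinarith

/-! ### The energy in terms of increments, and lattice sampling -/

lemma measurable_theta : Measurable theta := by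
  unfold theta; fun_prop

/-- The `θ`-energy of `g` on `I` in terms of increments. -/
lemma theta_energy_eq {g : ℝ → ℝ} (hg : Measurable g) {I : Set ℝ} (hI : MeasurableSet I) :
    ∫⁻ x in I, ∫⁻ y in I, ENNReal.ofReal (theta |g y - g x| / |y - x| ^ 2)
      = 2 * ∫⁻ h in Ioi 0, (∫⁻ x, I.indicator 1 x * (I.indicator 1 (x + h)
          * ENNReal.ofReal (theta |g (x + h) - g x|))) * ENNReal.ofReal (1 / h ^ 2) := by
  have hth := measurable_theta
  have hI1 : Measurable (I.indicator (1 : ℝ → ℝ≥0∞)) := measurable_one.indicator hI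
  set H : ℝ → ℝ → ℝ≥0∞ := fun x y => I.indicator 1 x * (I.indicator 1 y
          * ENNReal.ofReal (theta |g y - g x| / |y - x| ^ 2)) with hH
  have hm : Measurable (Function.uncurry H) := by
    rw [hH]
    unfold Function.uncurry
    fun_prop
  have hs : ∀ x y, H x y = H y x := by
    intro x y
    simp only [hH]
    rw [mul_left_comm, abs_sub_comm, abs_sub_comm y x]
  have e1 : ∫⁻ x in I, ∫⁻ y in I, ENNReal.ofReal (theta |g y - g x| / |y - x| ^ 2)
      = ∫⁻ x, ∫⁻ y, H x y := by
    rw [← lintegral_indicator hI]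
    apply lintegral_congr
    intro x
    by_cases hx : x ∈ I
    · rw [indicator_of_mem hx, ← lintegral_indicator hI]
      apply lintegral_congr
      intro y
      by_cases hy : y ∈ I <;> simp [hH, hx, hy]
    · simp [hH, hx]
  rw [e1, lintegral_symm_eq H hm hs]
  congr 1
  apply setLIntegral_congr_fun measurableSet_Ioi
  intro h hh
  simp only [hH]
  rw [← lintegral_mul_const]
  · apply lintegral_congr
    intro x
    rw [mul_assoc, mul_assoc, ← ENNReal.ofReal_mul (theta_nonneg _), add_sub_cancel_left, sq_abs,
      mul_one_div]
  · fun_prop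

/-- Tiling of an interval by translates of a fundamental cell. -/
lemma lintegral_tile {Φ : ℝ → ℝ≥0∞} (hΦ : Measurable Φ) (a : ℝ) {ε : ℝ} (hε : 0 ≤ ε) (N : ℕ) :
    ∫⁻ x in Ico a (a + N * ε), Φ x
      = ∫⁻ s in Ico a (a + ε), ∑ i ∈ Finset.range N, Φ (s + i * ε) := by
  induction N with
  | zero => simp
  | succ N ih =>
    have hu : Ico a (a + (N + 1 : ℕ) * ε) = Ico a (a + N * ε) ∪ Ico (a + N * ε) (a + (N + 1) * ε) := by
      rw [Ico_union_Ico_eq_Ico (by nlinarith [(Nat.cast_nonneg N : (0:ℝ) ≤ N)]) (by nlinarith)]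
      push_cast; rfl
    have hd : Disjoint (Ico a (a + N * ε)) (Ico (a + N * ε) (a + (N + 1) * ε)) :=
      Ico_disjoint_Ico_same
    rw [hu, lintegral_union measurableSet_Ico hd, ih]
    simp_rw [Finset.sum_range_succ]
    rw [lintegral_add_right _ (by fun_prop)]
    congr 1
    rw [← lintegral_indicator measurableSet_Ico, ← lintegral_indicator measurableSet_Ico,
      ← lintegral_add_right_eq_self _ (N * ε)]
    apply lintegral_congr
    intro x
    have : x + N * ε ∈ Ico (a + N * ε) (a + (N + 1) * ε) ↔ x ∈ Ico a (a + ε) := by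
      constructor <;> rintro ⟨h1, h2⟩ <;> constructor <;> linarith
    by_cases h : x ∈ Ico a (a + ε)
    · rw [indicator_of_mem h, indicator_of_mem (this.2 h)]
    · rw [indicator_of_notMem h, indicator_of_notMem (fun h' => h (this.1 h'))]

/-- Markov's inequality for the number of lattice points falling in a small set `S`. -/
lemma volume_bad_shifts {S : Set ℝ} (hS : MeasurableSet S) {α ε ρ τ : ℝ} (hε : 0 < ε) (hρ : 0 < ρ)
    (hSτ : volume S ≤ ENNReal.ofReal (τ * ρ)) (p m : ℕ) :
    volume {s ∈ Ico α (α + ε) | ρ / (4 * ε) ≤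
      ∑ i ∈ Finset.range m, S.indicator (fun _ => (1 : ℝ)) (s + (p + i : ℕ) * ε)}
      ≤ ENNReal.ofReal (4 * τ * ε) := by
  have hS1 : Measurable (S.indicator (fun _ => (1 : ℝ≥0∞))) := measurable_const.indicator hS
  set Φ : ℝ → ℝ≥0∞ := fun x => S.indicator (fun _ => (1 : ℝ≥0∞)) (x + p * ε) with hΦ
  have hΦm : Measurable Φ := by fun_prop
  have h1 : ∫⁻ s in Ico α (α + ε), ∑ i ∈ Finset.range m, Φ (s + i * ε) ≤ volume S := by
    rw [← lintegral_tile hΦm α hε.le m]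
    refine (setLIntegral_le_lintegral _ _).trans ?_
    rw [hΦ, lintegral_add_right_eq_self (S.indicator (fun _ => (1 : ℝ≥0∞))) (p * ε),
      lintegral_indicator_const hS, one_mul]
  have h2 := mul_meas_ge_le_lintegral (μ := volume.restrict (Ico α (α + ε)))
    (f := fun s => ∑ i ∈ Finset.range m, Φ (s + i * ε)) (by fun_prop)
    (ENNReal.ofReal (ρ / (4 * ε)))
  have h3 := (h2.trans h1).trans hSτ
  have hr : 0 < ρ / (4 * ε) := by positivity
  rw [show τ * ρ = ρ / (4 * ε) * (4 * τ * ε) by field_simp, ENNReal.ofReal_mul hr.le,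
    ENNReal.mul_le_mul_iff_right (by simpa using hr) ENNReal.ofReal_ne_top,
    Measure.restrict_apply' measurableSet_Ico] at h3
  refine le_trans (measure_mono ?_) h3
  rintro s ⟨hs, hs2⟩
  refine ⟨?_, hs⟩
  rw [Set.mem_ofPred_eq]
  refine (ENNReal.ofReal_le_ofReal hs2).trans ?_
  rw [ENNReal.ofReal_sum_of_nonneg (fun i _ => indicator_nonneg (fun _ _ => zero_le_one) _)]
  apply Finset.sum_le_sum
  intro i _
  have : s + (p + i : ℕ) * ε = s + i * ε + p * ε := by push_cast; ring
  rw [this]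
  by_cases h : s + i * ε + p * ε ∈ S
  · simp [hΦ, h]
  · simp [hΦ, h]

lemma sum_range_ge_window {N p m : ℕ} (hpm : p + m ≤ N) (f : ℕ → ℝ) (hf : ∀ i, 0 ≤ f i) :
    ∑ i ∈ Finset.range m, f (p + i) ≤ ∑ i ∈ Finset.range N, f i := by
  calc ∑ i ∈ Finset.range m, f (p + i) ≤ ∑ i ∈ Finset.range (p + m), f i := by
        rw [Finset.sum_range_add]
        have := Finset.sum_nonneg (s := Finset.range p) (fun i _ => hf i)
        linarith
    _ ≤ _ := Finset.sum_le_sum_of_subset_of_nonneg (by simpa using hpm) (fun i _ _ => hf i)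

/-! ### Lower bound on an interval -/

/-- Lower bound for the `θ`-energy on an interval, for a function which is mostly below `A` on a
window at its left end and mostly above `B ≥ A + n + 1` on a window at its right end. -/
lemma theta_energy_ge {g : ℝ → ℝ} (hg : Measurable g) {α β ρ τ A B : ℝ} {n : ℕ} (hρ : 0 < ρ)
    (hρL : ρ ≤ β - α) (hn : 1 ≤ n) (hAB : A + n + 1 ≤ B) (hτ0 : 0 ≤ τ) (hτ : τ ≤ 1 / 8)
    (hleft : volume {x ∈ Ico α (α + ρ) | A < g x} ≤ ENNReal.ofReal (τ * ρ))
    (hright : volume {x ∈ Ico (β - ρ) β | g x < B} ≤ ENNReal.ofReal (τ * ρ)) :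
    ENNReal.ofReal (2 * ((1 - 8 * τ) * (n * Real.log 2 - 1 + Real.log (ρ / (4 * (β - α))))))
      ≤ ∫⁻ x in Ico α β, ∫⁻ y in Ico α β,
          ENNReal.ofReal (theta |g y - g x| / |y - x| ^ 2) := by
  set L := β - α with hL
  have hLpos : 0 < L := hρ.trans_le hρL
  set κ := ρ / (4 * L) with hκ
  have hκpos : 0 < κ := by positivity
  set Q1 := n * Real.log 2 - 1 + Real.log κ with hQ1
  rcases lt_or_ge Q1 0 with hneg | hQ1pos
  · rw [ENNReal.ofReal_of_nonpos]
    · exact zero_le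
    · have : 0 ≤ 1 - 8 * τ := by linarith
      nlinarith
  set K : ℝ := max 1 (n * Real.log 2) with hK
  have hK1 : 1 ≤ K := le_max_left _ _
  have hth := measurable_theta
  set I := Ico α β with hI
  have hIm : MeasurableSet I := measurableSet_Ico
  have hI1 : Measurable (I.indicator (1 : ℝ → ℝ≥0∞)) := measurable_one.indicator hIm
  rw [theta_energy_eq hg hIm, ENNReal.ofReal_mul (by norm_num), ENNReal.ofReal_ofNat]
  gcongr
  set H : ℝ → ℝ → ℝ≥0∞ := fun x y => I.indicator 1 x * (I.indicator 1 y
      * ENNReal.ofReal (theta |g y - g x|)) with hH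
  have hHm : Measurable (Function.uncurry H) := by
    rw [hH]; unfold Function.uncurry; fun_prop
  have hHc : ∀ c : ℝ, Measurable (fun x => H x (x + c)) := by
    intro c; simp only [hH]; fun_prop
  refine le_lintegral_of_lattice (F := fun h => ∫⁻ x, H x (x + h)) ?_ hK1
    (show (0 : ℝ) < ρ / 4 by positivity) ?_
  · have : Measurable (fun p : ℝ × ℝ => H p.2 (p.2 + p.1)) :=
      hHm.comp (by fun_prop : Measurable (fun p : ℝ × ℝ => (p.2, p.2 + p.1)))
    exact this.lintegral_prod_right'
  intro ε hε hε4
  set N := ⌊L / ε⌋₊ with hN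
  set m := ⌊ρ / ε⌋₊ - 1 with hm
  have hNle : N * ε ≤ L := by
    rw [← le_div_iff₀ hε]; exact Nat.floor_le (by positivity)
  have hNgt : L < (N + 1) * ε := by
    rw [← div_lt_iff₀ hε]; exact Nat.lt_floor_add_one _
  have h4 : 4 ≤ ρ / ε := by rw [le_div_iff₀ hε]; linarith
  have hfl : 4 ≤ ⌊ρ / ε⌋₊ := Nat.le_floor (by exact_mod_cast h4)
  have hmc : (m : ℝ) = ⌊ρ / ε⌋₊ - 1 := by rw [hm]; push_cast [show 1 ≤ ⌊ρ / ε⌋₊ by omega]; ring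
  have hm1 : ((m : ℝ) + 1) * ε ≤ ρ := by
    rw [hmc, sub_add_cancel, ← le_div_iff₀ hε]; exact Nat.floor_le (by positivity)
  have hm2 : ρ / (2 * ε) ≤ m := by
    have := Nat.lt_floor_add_one (ρ / ε)
    rw [hmc, show ρ / (2 * ε) = ρ / ε / 2 by field_simp]
    linarith
  have hmN : m ≤ N := by
    have : ⌊ρ / ε⌋₊ ≤ N := Nat.floor_le_floor (by gcongr)
    omega
  have hN1 : 1 ≤ N := by omega
  have hκN : κ * N ≤ ρ / (4 * ε) := by
    rw [hκ, div_mul_eq_mul_div, div_le_div_iff₀ (by positivity) (by positivity)]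
    nlinarith
  set S1 := {x ∈ Ico α (α + ρ) | A < g x} with hS1
  set S2 := {x ∈ Ico (β - ρ) β | g x < B} with hS2
  have hS1m : MeasurableSet S1 := measurableSet_Ico.inter (measurableSet_lt measurable_const hg)
  have hS2m : MeasurableSet S2 := measurableSet_Ico.inter (measurableSet_lt hg measurable_const)
  set J := Ico α (α + ε) with hJ
  set b1 := {s ∈ J | ρ / (4 * ε) ≤
      ∑ i ∈ Finset.range m, S1.indicator (fun _ => (1 : ℝ)) (s + (0 + i : ℕ) * ε)} with hb1
  set b2 := {s ∈ J | ρ / (4 * ε) ≤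
      ∑ i ∈ Finset.range m, S2.indicator (fun _ => (1 : ℝ)) (s + (N - m + i : ℕ) * ε)} with hb2
  have hb1v : volume b1 ≤ ENNReal.ofReal (4 * τ * ε) :=
    volume_bad_shifts hS1m hε hρ hleft 0 m
  have hb2v : volume b2 ≤ ENNReal.ofReal (4 * τ * ε) :=
    volume_bad_shifts hS2m hε hρ hright (N - m) m
  have hgood : ENNReal.ofReal ((1 - 8 * τ) * ε) ≤ volume (J \ (b1 ∪ b2)) := by
    have h1 : volume J ≤ volume (J \ (b1 ∪ b2)) + (volume b1 + volume b2) := by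
      refine (measure_mono (?_ : J ⊆ (J \ (b1 ∪ b2)) ∪ (b1 ∪ b2))).trans
        ((measure_union_le _ _).trans (add_le_add le_rfl (measure_union_le _ _)))
      intro x hx
      by_cases h : x ∈ b1 ∪ b2
      · exact Or.inr h
      · exact Or.inl ⟨hx, h⟩
    have h2 : volume J = ENNReal.ofReal ε := by rw [hJ, Real.volume_Ico]; congr 1; ring
    rw [show (1 - 8 * τ) * ε = ε - (4 * τ * ε + 4 * τ * ε) by ring,
      ENNReal.ofReal_sub _ (by positivity), tsub_le_iff_right, ← h2]
    refine h1.trans ?_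
    rw [ENNReal.ofReal_add (by positivity) (by positivity)]
    gcongr
  -- the lattice sum at the shift `s`
  set D : ℝ → ℝ≥0∞ := fun s => ∑ i ∈ Finset.range N, ∑' k : ℕ, ENNReal.ofReal (wt K (k + 1))
      * H (s + i * ε) (s + i * ε + (k + 1) * ε) with hD
  have hpt : ∀ s ∈ J \ (b1 ∪ b2), ENNReal.ofReal Q1 ≤ D s := by
    rintro s ⟨hsJ, hsb⟩
    have hsI : ∀ i : ℕ, i < N → s + i * ε ∈ I := by
      intro i hi
      have : (i : ℝ) + 1 ≤ N := by exact_mod_cast hi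
      have h0 : (0 : ℝ) ≤ i * ε := by positivity
      constructor
      · linarith [hsJ.1]
      · nlinarith [hsJ.2]
    have hcount : ∀ (p : ℕ) (S : Set ℝ) (P : ℝ → Prop) [DecidablePred P], p + m ≤ N →
        (∀ i < m, s + (p + i : ℕ) * ε ∉ S → P (g (s + (p + i : ℕ) * ε))) →
        ∑ i ∈ Finset.range m, S.indicator (fun _ => (1 : ℝ)) (s + (p + i : ℕ) * ε) < ρ / (4 * ε) →
        κ * N ≤ ∑ i : Fin N, if P (g (s + (i : ℕ) * ε)) then (1 : ℝ) else 0 := by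
      intro p S P _ hp hP hlt
      rw [← Finset.sum_range (fun i : ℕ => if P (g (s + i * ε)) then (1 : ℝ) else 0)]
      refine le_trans ?_ (sum_range_ge_window hp _ (fun i => by split_ifs <;> norm_num))
      have : ∑ i ∈ Finset.range m, (1 - S.indicator (fun _ => (1 : ℝ)) (s + (p + i : ℕ) * ε))
          ≤ ∑ i ∈ Finset.range m, if P (g (s + (p + i : ℕ) * ε)) then (1 : ℝ) else 0 := by
        apply Finset.sum_le_sum
        intro i hi
        by_cases h : s + (p + i : ℕ) * ε ∈ S
        · rw [indicator_of_mem h]; split_ifs <;> norm_num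
        · rw [indicator_of_notMem h, if_pos (hP i (Finset.mem_range.1 hi) h)]; norm_num
      refine le_trans ?_ this
      rw [Finset.sum_sub_distrib]
      simp only [Finset.sum_const, Finset.card_range, nsmul_eq_mul, mul_one]
      have : ρ / (2 * ε) = ρ / (4 * ε) + ρ / (4 * ε) := by field_simp; norm_num
      linarith
    have hA : κ * N ≤ ∑ i : Fin N, if g (s + (i : ℕ) * ε) ≤ A then (1 : ℝ) else 0 := by
      refine hcount 0 S1 (fun t => t ≤ A) (by omega) ?_ ?_
      · intro i hi hnot
        by_contra! hlt
        refine hnot ⟨⟨?_, ?_⟩, hlt⟩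
        · have h0 : (0 : ℝ) ≤ (0 + i : ℕ) * ε := by positivity
          linarith [hsJ.1]
        · have : ((0 + i : ℕ) : ℝ) ≤ m := by exact_mod_cast (by omega : 0 + i ≤ m)
          nlinarith [hsJ.2]
      · by_contra! h
        exact hsb (Or.inl ⟨hsJ, h⟩)
    have hB : κ * N ≤ ∑ i : Fin N, if B ≤ g (s + (i : ℕ) * ε) then (1 : ℝ) else 0 := by
      refine hcount (N - m) S2 (fun t => B ≤ t) (by omega) ?_ ?_
      · intro i hi hnot
        by_contra! hlt
        refine hnot ⟨⟨?_, ?_⟩, hlt⟩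
        · have : (N : ℝ) - m ≤ (N - m + i : ℕ) := by push_cast [hmN]; linarith [(Nat.cast_nonneg i : (0:ℝ) ≤ i)]
          nlinarith [hsJ.1]
        · exact (hsI _ (by omega)).2
      · by_contra! h
        exact hsb (Or.inr ⟨hsJ, h⟩)
    have hE := energy_theta hK1 (le_max_right _ _) hκpos hN1 hn hAB
      (fun i : Fin N => g (s + (i : ℕ) * ε)) hA hB
    refine (ENNReal.ofReal_le_ofReal hE).trans ?_
    rw [ENNReal.ofReal_sum_of_nonneg (fun i _ => Finset.sum_nonneg (fun j _ => by
      have := wt_nonneg hK1 (j - i); have := theta_nonneg |g (s + (j : ℕ) * ε) - g (s + (i : ℕ) * ε)|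
      split_ifs <;> positivity))]
    simp only [hD]
    rw [Finset.sum_range]
    apply Finset.sum_le_sum
    intro i _
    rw [ENNReal.ofReal_sum_of_nonneg (fun j _ => by
      have := wt_nonneg hK1 (j - i); have := theta_nonneg |g (s + (j : ℕ) * ε) - g (s + (i : ℕ) * ε)|
      split_ifs <;> positivity)]
    set f : ℕ → ℝ≥0∞ := fun k => ENNReal.ofReal (wt K (k + 1))
      * H (s + (i : ℕ) * ε) (s + (i : ℕ) * ε + (k + 1) * ε) with hf
    calc ∑ j : Fin N, ENNReal.ofReal (if i < j then wt K (j - i)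
            * theta |g (s + (j : ℕ) * ε) - g (s + (i : ℕ) * ε)| else 0)
        = ∑ j : Fin N, if (i : ℕ) < j then f (j - i - 1) else 0 := by
          apply Finset.sum_congr rfl
          intro j _
          by_cases hij : i < j
          · have hij' : (i : ℕ) < j := hij
            rw [if_pos hij, if_pos hij', hf]
            simp only
            have e1 : (j : ℕ) - i - 1 + 1 = j - i := by omega
            have e2 : s + (i : ℕ) * ε + (((j - i - 1 : ℕ) : ℝ) + 1) * ε = s + (j : ℕ) * ε := by
              have : (((j - i - 1 : ℕ) : ℝ) + 1) = (j : ℝ) - i := by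
                have h3 : ((j - i - 1 + 1 : ℕ) : ℝ) = ((j - i : ℕ) : ℝ) := by rw [e1]
                rw [Nat.cast_sub hij'.le] at h3
                push_cast at h3 ⊢
                exact h3
              rw [this]; ring
            rw [e1, e2, hH]
            simp only
            rw [indicator_of_mem (hsI i i.2), indicator_of_mem (hsI j j.2),
              ENNReal.ofReal_mul (wt_nonneg hK1 _)]
            simp
          · have hij' : ¬ (i : ℕ) < j := hij
            rw [if_neg hij, if_neg hij', ENNReal.ofReal_zero]
      _ = ∑ j ∈ Finset.range N, if (i : ℕ) < j then f (j - i - 1) else 0 :=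
          (Finset.sum_range (fun j : ℕ => if (i : ℕ) < j then f (j - i - 1) else 0)).symm
      _ = ∑ k ∈ Finset.range (N - i - 1), f k := by
          rw [← Finset.sum_filter]
          refine Finset.sum_nbij' (fun j => j - i - 1) (fun k => k + i + 1) ?_ ?_ ?_ ?_ ?_
          · intro j hj; simp only [Finset.mem_filter, Finset.mem_range] at hj ⊢; omega
          · intro k hk; simp only [Finset.mem_filter, Finset.mem_range] at hk ⊢; omega
          · intro j hj; simp only [Finset.mem_filter, Finset.mem_range] at hj ⊢; omega
          · intro k hk; omega
          · intro j hj; rfl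
      _ ≤ ∑' k, f k := ENNReal.sum_le_tsum _
  have hDm : Measurable (fun x => ∑' k : ℕ, ENNReal.ofReal (wt K (k + 1)) * H x (x + (k + 1) * ε)) :=
    Measurable.tsum (fun k => (hHc _).const_mul _)
  calc ENNReal.ofReal (ε * ((1 - 8 * τ) * Q1))
      = ENNReal.ofReal Q1 * ENNReal.ofReal ((1 - 8 * τ) * ε) := by
        rw [← ENNReal.ofReal_mul hQ1pos]; congr 1; ring
    _ ≤ ENNReal.ofReal Q1 * volume (J \ (b1 ∪ b2)) := by gcongr
    _ = ∫⁻ s in J \ (b1 ∪ b2), ENNReal.ofReal Q1 := by rw [setLIntegral_const]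
    _ ≤ ∫⁻ s in J \ (b1 ∪ b2), D s := by
        refine setLIntegral_mono ?_ hpt
        exact Finset.measurable_sum _ (fun i _ => hDm.comp (measurable_id.add_const _))
    _ ≤ ∫⁻ s in J, D s := lintegral_mono_set sdiff_subset
    _ = ∫⁻ x in Ico α (α + N * ε), ∑' k : ℕ, ENNReal.ofReal (wt K (k + 1))
          * H x (x + (k + 1) * ε) := (lintegral_tile hDm α hε.le N).symm
    _ ≤ ∫⁻ x, ∑' k : ℕ, ENNReal.ofReal (wt K (k + 1)) * H x (x + (k + 1) * ε) :=
        setLIntegral_le_lintegral _ _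
    _ = _ := by
        rw [lintegral_tsum (fun k => ((hHc _).const_mul _).aemeasurable)]
        congr 1; ext k
        rw [lintegral_const_mul _ (hHc _)]

/-! ### The lower bound -/

lemma Lambda1_theta_eq {δ c : ℝ} (hδ : 0 < δ) (hc : |c| = 1) (U : ℝ → ℝ) (I : Set ℝ) :
    Lambda1 theta 1 δ U I = ENNReal.ofReal δ * ∫⁻ x in I, ∫⁻ y in I,
      ENNReal.ofReal (theta |c * U y / δ - c * U x / δ| / |y - x| ^ 2) := by
  unfold Lambda1
  rw [← lintegral_const_mul' _ _ ENNReal.ofReal_ne_top]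
  congr 1; ext x
  rw [← lintegral_const_mul' _ _ ENNReal.ofReal_ne_top]
  congr 1; ext y
  rw [← ENNReal.ofReal_mul hδ.le]
  congr 1
  have e1 : |c * U y / δ - c * U x / δ| = |U y - U x| / δ := by
    rw [← sub_div, ← mul_sub, abs_div, abs_mul, hc, one_mul, abs_of_pos hδ]
  have e2 : |y - x| ^ (1 + 1 : ℝ) = |y - x| ^ 2 := by
    rw [show (1 + 1 : ℝ) = ((2 : ℕ) : ℝ) by norm_num, Real.rpow_natCast]
  rw [e1, e2, Real.rpow_one]
  ring

lemma sum_Lambda1_le {φ : ℝ → ℝ} {p δ : ℝ} {U : ℝ → ℝ} {N : ℕ} {I : ℕ → Set ℝ}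
    (hI : ∀ i, MeasurableSet (I i)) (hd : Pairwise (Function.onFun Disjoint I)) :
    ∑ i ∈ Finset.range N, Lambda1 φ p δ U (I i) ≤ Lambda1 φ p δ U univ := by
  unfold Lambda1
  calc _ ≤ ∑ i ∈ Finset.range N, ∫⁻ x in I i, ∫⁻ y in univ,
            ENNReal.ofReal (φ (|U y - U x| / δ) * δ ^ p / |y - x| ^ (1 + p)) := by
        apply Finset.sum_le_sum
        intro i _
        exact lintegral_mono (fun x => lintegral_mono_set (subset_univ _))
    _ = ∫⁻ x in ⋃ i ∈ Finset.range N, I i, ∫⁻ y in univ,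
            ENNReal.ofReal (φ (|U y - U x| / δ) * δ ^ p / |y - x| ^ (1 + p)) := by
        rw [lintegral_biUnion_finset (fun i _ j _ hij => hd hij) (fun i _ => hI i)]
    _ ≤ _ := lintegral_mono_set (subset_univ _)

/-- Markov's inequality along an `L¹`-convergent family. -/
lemma eventually_volume_le {u : ℝ → ℝ} (hu : Integrable u) {U : ℝ → ℝ → ℝ}
    (hU : ∀ δ > (0 : ℝ), Measurable (U δ))
    (hconv : Tendsto (fun δ : ℝ => eLpNorm (fun x => U δ x - u x) 1 volume) (𝓝[>] 0) (𝓝 0))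
    {η r : ℝ} (hη : 0 < η) (hr : 0 < r) :
    ∀ᶠ δ in 𝓝[>] (0 : ℝ), volume {x | η ≤ |U δ x - u x|} ≤ ENNReal.ofReal r := by
  have h1 : ∀ᶠ δ in 𝓝[>] (0 : ℝ), eLpNorm (fun x => U δ x - u x) 1 volume
      < ENNReal.ofReal (η * r) :=
    hconv.eventually_lt_const (by simpa using mul_pos hη hr)
  filter_upwards [h1, self_mem_nhdsWithin] with δ hδ hpos
  have h2 := mul_meas_ge_le_lintegral₀ (μ := volume) (f := fun x => ‖U δ x - u x‖ₑ)
    (((hU δ hpos).aestronglyMeasurable.sub hu.1).enorm) (ENNReal.ofReal η)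
  rw [← eLpNorm_one_eq_lintegral_enorm] at h2
  have h3 := h2.trans hδ.le
  rw [ENNReal.ofReal_mul hη.le, ENNReal.mul_le_mul_iff_right (by simpa using hη)
    ENNReal.ofReal_ne_top] at h3
  convert h3 using 3
  ext x
  rw [Real.enorm_eq_ofReal_abs,
    ENNReal.ofReal_le_ofReal_iff (abs_nonneg _)]

/-- Asymptotic lower bound for the energy carried by one increment of `u`. -/
lemma eventually_Lambda1_ge {u : ℝ → ℝ} (hu : Integrable u) {U : ℝ → ℝ → ℝ}
    (hU : ∀ δ > (0 : ℝ), Measurable (U δ))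
    (hconv : Tendsto (fun δ : ℝ => eLpNorm (fun x => U δ x - u x) 1 volume) (𝓝[>] 0) (𝓝 0))
    {p q ρ η c V : ℝ} (hc : c = 1 ∨ c = -1) (hη : 0 < η) (hρ : 0 < ρ) (hρpq : ρ ≤ q - p)
    (hp : ∀ x ∈ Ico p (p + 2 * ρ), |u x - u p| ≤ η) (hq : ∀ x ∈ Ico q (q + ρ), |u x - u q| ≤ η)
    (hV : V < 2 * Real.log 2 * (c * (u q - u p) - 4 * η)) :
    ∀ᶠ δ in 𝓝[>] (0 : ℝ),
      ENNReal.ofReal V ≤ Lambda1 theta 1 δ (U δ) (Ico (p + ρ) (q + ρ)) := by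
  have hlog2 : 0 < Real.log 2 := Real.log_pos (by norm_num)
  set D := c * (u q - u p) - 4 * η with hD
  rcases le_or_gt D 0 with hD0 | hD0
  · refine Eventually.of_forall fun δ => ?_
    rw [ENNReal.ofReal_of_nonpos]
    · exact zero_le
    · nlinarith
  have hcabs : |c| = 1 := by rcases hc with rfl | rfl <;> simp
  obtain ⟨τ, hτV, hτ0, hτ8⟩ : ∃ τ : ℝ, V < 2 * (1 - 8 * τ) * (D * Real.log 2) ∧ 0 < τ
      ∧ τ ≤ 1 / 8 := by
    have hcont : Tendsto (fun τ : ℝ => 2 * (1 - 8 * τ) * (D * Real.log 2)) (𝓝[>] 0)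
        (𝓝 (2 * (1 - 8 * 0) * (D * Real.log 2))) :=
      (Continuous.tendsto (by fun_prop) 0).mono_left nhdsWithin_le_nhds
    have h1 := hcont.eventually_const_lt (show V < _ by linarith)
    have h2 : ∀ᶠ τ in 𝓝[>] (0 : ℝ), τ ∈ Ioc 0 (1 / 8) := Ioc_mem_nhdsGT (by norm_num)
    obtain ⟨τ, h, h'⟩ := (h1.and h2).exists
    exact ⟨τ, h, h'.1, h'.2⟩
  set lκ := Real.log (ρ / (4 * (q + ρ - (p + ρ)))) with hlκ
  have hlim : Tendsto (fun δ : ℝ => 2 * (1 - 8 * τ) * (D * Real.log 2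
      - δ * (2 * Real.log 2 + 1 - lκ))) (𝓝[>] 0) (𝓝 (2 * (1 - 8 * τ) * (D * Real.log 2
      - 0 * (2 * Real.log 2 + 1 - lκ)))) :=
    (Continuous.tendsto (by fun_prop) 0).mono_left nhdsWithin_le_nhds
  have hδV := hlim.eventually_const_lt (show V < _ by linarith)
  have hδD : ∀ᶠ δ in 𝓝[>] (0 : ℝ), δ ∈ Ioc 0 (D / 2) := Ioc_mem_nhdsGT (by positivity)
  filter_upwards [hδV, hδD, eventually_volume_le hu hU hconv hη (mul_pos hτ0 hρ)]
    with δ h1 h2 h3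
  have hδ : 0 < δ := h2.1
  have hbad : ∀ x, (η ≤ c * U δ x - c * u x ∨ η ≤ c * u x - c * U δ x) →
      η ≤ |U δ x - u x| := by
    intro x hx
    rw [le_abs]
    rcases hc with rfl | rfl <;> rcases hx with hx | hx
    · left; linarith
    · right; linarith
    · right; linarith
    · left; linarith
  have hcle : ∀ {a b : ℝ}, |a - b| ≤ η → c * a ≤ c * b + η ∧ c * b ≤ c * a + η := by
    intro a b hab
    rw [abs_le] at hab
    rcases hc with rfl | rfl <;> constructor <;> linarith
  set n := ⌊D / δ⌋₊ - 1 with hn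
  have hDδ : 2 ≤ D / δ := by rw [le_div_iff₀ hδ]; linarith [h2.2]
  have hfl : 2 ≤ ⌊D / δ⌋₊ := Nat.le_floor (by exact_mod_cast hDδ)
  have hnc : (n : ℝ) = ⌊D / δ⌋₊ - 1 := by
    rw [hn]; push_cast [show 1 ≤ ⌊D / δ⌋₊ by omega]; ring
  have hfl1 : (⌊D / δ⌋₊ : ℝ) ≤ D / δ := Nat.floor_le (by positivity)
  have hfl2 : D / δ < ⌊D / δ⌋₊ + 1 := Nat.lt_floor_add_one _
  have key := theta_energy_ge (g := fun x => c * U δ x / δ) (((hU δ hδ).const_mul c).div_const δ)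
    (α := p + ρ) (β := q + ρ) (ρ := ρ) (τ := τ) (A := (c * u p + 2 * η) / δ)
    (B := (c * u q - 2 * η) / δ) (n := n) hρ (by linarith) (by omega)
    (by
      have : (c * u q - 2 * η) / δ = (c * u p + 2 * η) / δ + D / δ := by rw [hD]; ring
      rw [this]; linarith)
    hτ0.le hτ8
    (by
      refine (measure_mono ?_).trans h3
      rintro x ⟨hx, hlt⟩
      apply hbad
      left
      have := (hcle (hp x ⟨by linarith [hx.1], by linarith [hx.2]⟩)).1
      have hlt' := (div_lt_div_iff_of_pos_right hδ).1 hlt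
      linarith)
    (by
      refine (measure_mono ?_).trans h3
      rintro x ⟨hx, hlt⟩
      apply hbad
      right
      have := (hcle (hq x ⟨by linarith [hx.1], by linarith [hx.2]⟩)).2
      have hlt' := (div_lt_div_iff_of_pos_right hδ).1 hlt
      linarith)
  rw [Lambda1_theta_eq hδ hcabs]
  refine le_trans ?_ (mul_le_mul_right key _)
  rw [← ENNReal.ofReal_mul hδ.le]
  apply ENNReal.ofReal_le_ofReal
  refine h1.le.trans ?_
  have hfac : 0 ≤ 2 * (1 - 8 * τ) := by linarith
  rw [show δ * (2 * ((1 - 8 * τ) * (n * Real.log 2 - 1 + lκ)))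
    = 2 * (1 - 8 * τ) * (δ * (n * Real.log 2 - 1 + lκ)) by ring]
  apply mul_le_mul_of_nonneg_left _ hfac
  have hnδ : D - 2 * δ ≤ δ * n := by
    have : D = D / δ * δ := by field_simp
    nlinarith
  nlinarith

/-- The lower bound half of the theorem. -/
lemma liminf_Lambda1_ge {u : ℝ → ℝ} (hu : Integrable u)
    (hrc : ∀ x : ℝ, ContinuousWithinAt u (Set.Ici x) x) {U : ℝ → ℝ → ℝ}
    (hU : ∀ δ > (0 : ℝ), Measurable (U δ))
    (hconv : Tendsto (fun δ : ℝ => eLpNorm (fun x => U δ x - u x) 1 volume) (𝓝[>] 0) (𝓝 0)) :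
    ENNReal.ofReal (2 * Real.log 2) * eVariationOn u Set.univ ≤
      Filter.liminf (fun δ : ℝ => Lambda1 theta 1 δ (U δ) Set.univ) (𝓝[>] 0) := by
  have hlog2 : 0 < Real.log 2 := Real.log_pos (by norm_num)
  unfold eVariationOn
  rw [ENNReal.mul_iSup]
  refine iSup_le ?_
  rintro ⟨N, x, hx, -⟩
  simp only
  set Δ : ℕ → ℝ := fun i => |u (x (i + 1)) - u (x i)| with hΔ
  have e1 : ENNReal.ofReal (2 * Real.log 2) * ∑ i ∈ Finset.range N, edist (u (x (i + 1))) (u (x i))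
      = ∑ i ∈ Finset.range N, ENNReal.ofReal (2 * Real.log 2 * (Δ i - 5 * 0)) := by
    rw [Finset.mul_sum]
    apply Finset.sum_congr rfl
    intro i _
    rw [edist_dist, Real.dist_eq, ← ENNReal.ofReal_mul (by positivity)]
    simp [hΔ]
  have hlim : Tendsto (fun η : ℝ => ∑ i ∈ Finset.range N,
      ENNReal.ofReal (2 * Real.log 2 * (Δ i - 5 * η))) (𝓝[>] 0)
      (𝓝 (∑ i ∈ Finset.range N, ENNReal.ofReal (2 * Real.log 2 * (Δ i - 5 * 0)))) := by
    apply tendsto_finsetSum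
    intro i _
    apply ENNReal.tendsto_ofReal
    exact (Continuous.tendsto (by fun_prop) 0).mono_left nhdsWithin_le_nhds
  rw [e1]
  refine le_of_tendsto hlim ?_
  filter_upwards [self_mem_nhdsWithin] with η hη
  have hη : 0 < η := hη
  -- right-continuity on short windows, uniformly over the partition
  have hwin : ∀ y : ℝ, ∀ᶠ ρ in 𝓝[>] (0 : ℝ), ∀ z ∈ Ico y (y + 2 * ρ), |u z - u y| ≤ η := by
    intro y
    have h1 := Metric.continuousWithinAt_iff.1 (hrc y) η hη
    obtain ⟨r, hr, hr2⟩ := h1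
    have : ∀ᶠ ρ in 𝓝[>] (0 : ℝ), ρ ∈ Ioo 0 (r / 2) := Ioo_mem_nhdsGT (by positivity)
    filter_upwards [this] with ρ hρ z hz
    have := hr2 hz.1 (by
      rw [Real.dist_eq, abs_of_nonneg (by linarith [hz.1])]
      linarith [hz.2, hρ.2])
    rw [Real.dist_eq] at this
    exact this.le
  have hρ : ∀ᶠ ρ in 𝓝[>] (0 : ℝ), (∀ i ∈ Finset.range (N + 1), ∀ z ∈ Ico (x i) (x i + 2 * ρ),
      |u z - u (x i)| ≤ η) ∧ (∀ i ∈ Finset.range N, x i < x (i + 1) → ρ ≤ x (i + 1) - x i)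
      ∧ 0 < ρ := by
    refine Eventually.and ?_ (Eventually.and ?_ self_mem_nhdsWithin)
    · rw [Filter.eventually_all_finset]
      intro i _
      exact hwin (x i)
    · rw [Filter.eventually_all_finset]
      intro i _
      by_cases h : x i < x (i + 1)
      · have : ∀ᶠ ρ in 𝓝[>] (0 : ℝ), ρ ∈ Ioo 0 (x (i + 1) - x i) := Ioo_mem_nhdsGT (by linarith)
        filter_upwards [this] with ρ hρ _ using hρ.2.le
      · exact Eventually.of_forall fun ρ h' => absurd h' h
  obtain ⟨ρ, hρ1, hρ2, hρ0⟩ := hρ.exists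
  refine le_liminf_of_le (by isBoundedDefault) ?_
  have hev : ∀ᶠ δ in 𝓝[>] (0 : ℝ), ∀ i ∈ Finset.range N,
      ENNReal.ofReal (2 * Real.log 2 * (Δ i - 5 * η))
        ≤ Lambda1 theta 1 δ (U δ) (Ico (x i + ρ) (x (i + 1) + ρ)) := by
    rw [Filter.eventually_all_finset]
    intro i hi
    have hiN := Finset.mem_range.1 hi
    rcases (hx (Nat.le_succ i)).lt_or_eq with hlt | heq
    · obtain ⟨c, hc, hcΔ⟩ : ∃ c : ℝ, (c = 1 ∨ c = -1) ∧ c * (u (x (i + 1)) - u (x i)) = Δ i := by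
        rcases le_total 0 (u (x (i + 1)) - u (x i)) with h | h
        · exact ⟨1, Or.inl rfl, by simp only [hΔ]; rw [abs_of_nonneg h, one_mul]⟩
        · exact ⟨-1, Or.inr rfl, by simp only [hΔ]; rw [abs_of_nonpos h, neg_one_mul]⟩
      refine eventually_Lambda1_ge hu hU hconv hc hη hρ0 (hρ2 i hi hlt)
        (hρ1 i (by simp; omega))
        (fun z hz => hρ1 (i + 1) (by simp; omega) z ⟨hz.1, by linarith [hz.2]⟩) ?_
      rw [hcΔ]
      nlinarith
    · refine Eventually.of_forall fun δ => ?_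
      rw [ENNReal.ofReal_of_nonpos]
      · exact zero_le
      · have : Δ i = 0 := by
          simp only [hΔ]; rw [Nat.succ_eq_add_one] at heq; rw [heq]; simp
        rw [this]
        nlinarith
  filter_upwards [hev] with δ hδ
  refine (Finset.sum_le_sum hδ).trans (sum_Lambda1_le (fun i => measurableSet_Ico) ?_)
  have hmono : Monotone (fun i => x i + ρ) := fun i j hij => by simpa using hx hij
  exact hmono.pairwise_disjoint_on_Ico_succ

/-! ### The integral of the interaction law -/

lemma lintegral_theta_le {c : ℝ} (hc : 0 ≤ c) :
    ∫⁻ t in Ioi 0, ENNReal.ofReal (theta (c * t)) * ENNReal.ofReal (1 / t ^ 2)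
      ≤ ENNReal.ofReal (Real.log 2 * c) := by
  have hth := measurable_theta
  -- the case `c = 1`, where the integral is `log 2`
  have h1 : ∫⁻ t in Ioi 0, ENNReal.ofReal (theta t) * ENNReal.ofReal (1 / t ^ 2)
      ≤ ENNReal.ofReal (Real.log 2) := by
    have hp : ∀ t ∈ Ioi (0 : ℝ), ENNReal.ofReal (theta t) * ENNReal.ofReal (1 / t ^ 2)
        ≤ (Ioc 1 2).indicator (fun t => ENNReal.ofReal (1 / t - t ^ (-2 : ℝ))) t
          + (Ioi 2).indicator (fun t => ENNReal.ofReal (t ^ (-2 : ℝ))) t := by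
      intro t ht
      have ht : 0 < t := ht
      have hpow : t ^ (-2 : ℝ) = 1 / t ^ 2 := by
        rw [Real.rpow_neg ht.le, one_div]; norm_num
      rcases le_or_gt t 1 with h | h
      · have : theta t = 0 := by
          unfold theta; rw [max_eq_right (by linarith)]; simp
        rw [this]; simp
      · rcases le_or_gt t 2 with h2 | h2
        · rw [indicator_of_mem (show t ∈ Ioc (1 : ℝ) 2 from ⟨h, h2⟩),
            indicator_of_notMem (by simpa using h2), add_zero,
            ← ENNReal.ofReal_mul (theta_nonneg _)]
          apply ENNReal.ofReal_le_ofReal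
          have : theta t = t - 1 := by
            unfold theta; rw [max_eq_left (by linarith), min_eq_right (by linarith)]
          rw [this, hpow]
          apply le_of_eq
          field_simp
        · rw [indicator_of_notMem (by simp [h2]), indicator_of_mem (show t ∈ Ioi (2 : ℝ) from h2),
            zero_add, ← ENNReal.ofReal_mul (theta_nonneg _), hpow]
          apply ENNReal.ofReal_le_ofReal
          have := theta_le_one t
          have : 0 < 1 / t ^ 2 := by positivity
          nlinarith
    have hi1 : IntegrableOn (fun t : ℝ => 1 / t - t ^ (-2 : ℝ)) (Ioc 1 2) := by
      apply (ContinuousOn.integrableOn_Icc (a := 1) (b := 2) _).mono_set Ioc_subset_Icc_self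
      intro x hx
      have hx0 : x ≠ 0 := (zero_lt_one.trans_le hx.1).ne'
      exact ((continuousAt_const.div continuousAt_id hx0).sub
        (Real.continuousAt_rpow_const x _ (Or.inl hx0))).continuousWithinAt
    have hi2 : IntegrableOn (fun t : ℝ => t ^ (-2 : ℝ)) (Ioi 2) :=
      integrableOn_Ioi_rpow_of_lt (by norm_num) (by norm_num)
    calc _ ≤ ∫⁻ t in Ioi 0, ((Ioc 1 2).indicator (fun t => ENNReal.ofReal (1 / t - t ^ (-2 : ℝ))) t
          + (Ioi 2).indicator (fun t => ENNReal.ofReal (t ^ (-2 : ℝ))) t) :=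
          setLIntegral_mono' measurableSet_Ioi hp
      _ ≤ ∫⁻ t, ((Ioc 1 2).indicator (fun t => ENNReal.ofReal (1 / t - t ^ (-2 : ℝ))) t
          + (Ioi 2).indicator (fun t => ENNReal.ofReal (t ^ (-2 : ℝ))) t) :=
          setLIntegral_le_lintegral _ _
      _ = ENNReal.ofReal (Real.log 2 - 1 / 2) + ENNReal.ofReal (1 / 2) := by
          rw [lintegral_add_left (Measurable.indicator (by fun_prop) measurableSet_Ioc),
            lintegral_indicator measurableSet_Ioc, lintegral_indicator measurableSet_Ioi,
            ← ofReal_integral_eq_lintegral_ofReal hi1, ← ofReal_integral_eq_lintegral_ofReal hi2]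
          · congr 2
            · rw [← intervalIntegral.integral_of_le (by norm_num),
                intervalIntegral.integral_sub, integral_one_div_of_pos (by norm_num) (by norm_num),
                integral_rpow]
              · norm_num [Real.rpow_neg]
              · right
                constructor
                · norm_num
                · rw [uIcc_of_le (by norm_num)]; simp
              · apply intervalIntegral.intervalIntegrable_one_div
                · intro x hx
                  rw [uIcc_of_le (by norm_num)] at hx
                  linarith [hx.1]
                · fun_prop
              · apply intervalIntegral.intervalIntegrable_rpow
                right
                rw [uIcc_of_le (by norm_num)]; simp
            · rw [integral_Ioi_rpow_of_lt (by norm_num) (by norm_num)]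
              norm_num [Real.rpow_neg]
          · filter_upwards [ae_restrict_mem measurableSet_Ioi] with t ht
            exact Real.rpow_nonneg (by linarith [show (2 : ℝ) < t from ht]) _
          · filter_upwards [ae_restrict_mem measurableSet_Ioc] with t ht
            have ht0 : 0 < t := by linarith [ht.1]
            rw [Real.rpow_neg ht0.le, Pi.zero_apply, sub_nonneg]
            rw [← one_div]
            apply one_div_le_one_div_of_le ht0
            have := ht.1
            norm_num
            nlinarith
      _ = ENNReal.ofReal (Real.log 2) := by
          rw [← ENNReal.ofReal_add _ (by norm_num)]
          · congr 1; ring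
          · have := Real.log_two_gt_d9; linarith
  rcases hc.eq_or_lt with rfl | hc
  · simp [theta]
  rw [mul_comm, ENNReal.ofReal_mul hc.le]
  refine le_trans (le_of_eq ?_) (mul_le_mul_right h1 _)
  set G : ℝ → ℝ≥0∞ := fun t => (Ioi 0).indicator
    (fun t => ENNReal.ofReal (theta t) * ENNReal.ofReal (1 / t ^ 2)) t with hG
  have hGm : Measurable G := Measurable.indicator (by fun_prop) measurableSet_Ioi
  have e : ∫⁻ t in Ioi 0, ENNReal.ofReal (theta t) * ENNReal.ofReal (1 / t ^ 2) = ∫⁻ t, G t :=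
    (lintegral_indicator measurableSet_Ioi _).symm
  rw [e, ← lintegral_comp_mul_left_pos hGm hc, ← lintegral_const_mul _ (by fun_prop),
    ← lintegral_indicator measurableSet_Ioi]
  apply lintegral_congr
  intro t
  by_cases ht : 0 < t
  · have h2 : c * t ∈ Ioi (0 : ℝ) := mul_pos hc ht
    rw [indicator_of_mem (show t ∈ Ioi (0 : ℝ) from ht), hG]
    simp only
    rw [indicator_of_mem h2, mul_left_comm (ENNReal.ofReal c) (ENNReal.ofReal (theta (c * t))),
      mul_left_comm (ENNReal.ofReal c) (ENNReal.ofReal (theta (c * t))),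
      ← ENNReal.ofReal_mul hc.le, ← ENNReal.ofReal_mul hc.le]
    congr 2
    field_simp
  · have h2 : c * t ∉ Ioi (0 : ℝ) := by
      simp only [mem_Ioi, not_lt] at ht ⊢
      exact mul_nonpos_of_nonneg_of_nonpos hc.le ht
    rw [indicator_of_notMem (show t ∉ Ioi (0 : ℝ) from ht), hG]
    simp only
    rw [indicator_of_notMem h2]
    simp

/-- The energy in terms of rescaled increments. -/
lemma Lambda1_theta_rescale {w : ℝ → ℝ} (hw : Measurable w) {δ : ℝ} (hδ : 0 < δ) :
    Lambda1 theta 1 δ w univ = 2 * ∫⁻ t in Ioi 0,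
      (∫⁻ x, ENNReal.ofReal (theta (|w (x + δ * t) - w x| / δ))) * ENNReal.ofReal (1 / t ^ 2) := by
  have hth := measurable_theta
  rw [Lambda1_theta_eq hδ (c := 1) (by simp), theta_energy_eq (g := fun x => 1 * w x / δ)
    (by fun_prop) MeasurableSet.univ, mul_left_comm]
  congr 1
  simp only [indicator_univ, Pi.one_apply, one_mul]
  have e1 : ∀ x h : ℝ, |w (x + h) / δ - w x / δ| = |w (x + h) - w x| / δ := by
    intro x h
    rw [← sub_div, abs_div, abs_of_pos hδ]
  simp_rw [e1]
  set Ψ : ℝ → ℝ≥0∞ := fun h => ∫⁻ x, ENNReal.ofReal (theta (|w (x + h) - w x| / δ)) with hΨ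
  have hΨm : Measurable Ψ := by
    have : Measurable (fun p : ℝ × ℝ =>
      ENNReal.ofReal (theta (|w (p.2 + p.1) - w p.2| / δ))) := by fun_prop
    exact this.lintegral_prod_right'
  change _ * ∫⁻ h in Ioi 0, Ψ h * _ = ∫⁻ t in Ioi 0, Ψ (δ * t) * _
  set G : ℝ → ℝ≥0∞ := fun h => (Ioi 0).indicator (fun h => Ψ h * ENNReal.ofReal (1 / h ^ 2)) h with hG
  have hGm : Measurable G := Measurable.indicator (by fun_prop) measurableSet_Ioi
  have e : ∫⁻ h in Ioi 0, Ψ h * ENNReal.ofReal (1 / h ^ 2) = ∫⁻ t, G t :=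
    (lintegral_indicator measurableSet_Ioi _).symm
  rw [e, ← lintegral_comp_mul_left_pos hGm hδ, ← lintegral_const_mul _ (by fun_prop),
    ← lintegral_indicator measurableSet_Ioi]
  apply lintegral_congr
  intro t
  by_cases ht : 0 < t
  · have h2 : δ * t ∈ Ioi (0 : ℝ) := mul_pos hδ ht
    rw [indicator_of_mem (show t ∈ Ioi (0 : ℝ) from ht), hG]
    simp only
    rw [indicator_of_mem h2, mul_left_comm (ENNReal.ofReal δ) (Ψ _),
      mul_left_comm (ENNReal.ofReal δ) (Ψ _),
      ← ENNReal.ofReal_mul hδ.le, ← ENNReal.ofReal_mul hδ.le]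
    congr 2
    field_simp
  · have h2 : δ * t ∉ Ioi (0 : ℝ) := by
      simp only [mem_Ioi, not_lt] at ht ⊢
      exact mul_nonpos_of_nonneg_of_nonpos hδ.le ht
    rw [indicator_of_notMem (show t ∉ Ioi (0 : ℝ) from ht), hG]
    simp only
    rw [indicator_of_notMem h2]
    simp

/-! ### Energies of Lipschitz functions -/

/-- For a compactly supported Lipschitz function with a right derivative `g` everywhere, the
energies converge to a quantity at most `2 log 2 ∫ |g|`. -/
lemma limsup_Lambda1_le {w g : ℝ → ℝ} {M R : ℝ} (hM : 0 < M) (hw : Measurable w)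
    (hg : Measurable g) (hlip : ∀ x y, |w x - w y| ≤ M * |x - y|)
    (hsupp : ∀ x, x ∉ Icc (-R) R → w x = 0)
    (hder : ∀ x, HasDerivWithinAt w (g x) (Ioi x) x) :
    limsup (fun δ : ℝ => Lambda1 theta 1 δ w univ) (𝓝[>] 0)
      ≤ ENNReal.ofReal (2 * Real.log 2) * ∫⁻ x, ENNReal.ofReal |g x| := by
  have hth := measurable_theta
  have hthc : Continuous theta := by unfold theta; fun_prop
  have hlog2 : 0 < Real.log 2 := Real.log_pos (by norm_num)
  have hth0 : theta 0 = 0 := by simp [theta]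
  set Ψ : ℝ → ℝ → ℝ≥0∞ := fun δ t => ∫⁻ x, ENNReal.ofReal (theta (|w (x + δ * t) - w x| / δ)) with hΨ
  set Ψ0 : ℝ → ℝ≥0∞ := fun t => ∫⁻ x, ENNReal.ofReal (theta (|g x| * t)) with hΨ0
  -- inner integral: pointwise convergence in `t`
  have hin : ∀ t : ℝ, 0 < t → Tendsto (fun δ => Ψ δ t) (𝓝[>] 0) (𝓝 (Ψ0 t)) := by
    intro t ht
    apply tendsto_lintegral_filter_of_dominated_convergence
      (bound := (Icc (-R - t) R).indicator 1)
    · exact Eventually.of_forall fun δ => by fun_prop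
    · have : ∀ᶠ δ in 𝓝[>] (0 : ℝ), δ ∈ Ioo 0 1 := Ioo_mem_nhdsGT one_pos
      filter_upwards [this] with δ hδ
      refine Eventually.of_forall fun x => ?_
      by_cases hx : x ∈ Icc (-R - t) R
      · rw [indicator_of_mem hx]
        simpa using theta_le_one _
      · rw [indicator_of_notMem hx]
        have h1 : 0 < δ * t := mul_pos hδ.1 ht
        have h2 : δ * t < t := by nlinarith [hδ.2]
        have hx1 : w x = 0 := hsupp x (fun h => hx ⟨by linarith [h.1], h.2⟩)
        have hx2 : w (x + δ * t) = 0 :=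
          hsupp _ (fun h => hx ⟨by linarith [h.1], by linarith [h.2]⟩)
        simp [hx1, hx2, hth0]
    · rw [lintegral_indicator_one measurableSet_Icc, Real.volume_Icc]
      exact ENNReal.ofReal_ne_top
    · refine Eventually.of_forall fun x => ?_
      apply ENNReal.tendsto_ofReal
      apply (hthc.tendsto _).comp
      have h1 := (hasDerivWithinAt_iff_tendsto_slope' (self_notMem_Ioi)).1 (hder x)
      have h2 : Tendsto (fun δ : ℝ => x + δ * t) (𝓝[>] 0) (𝓝[>] x) := by
        apply tendsto_nhdsWithin_iff.2
        constructor
        · have : Tendsto (fun δ : ℝ => x + δ * t) (𝓝[>] 0) (𝓝 (x + 0 * t)) :=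
            (Continuous.tendsto (by fun_prop) 0).mono_left nhdsWithin_le_nhds
          simpa using this
        · filter_upwards [self_mem_nhdsWithin] with δ hδ
          have : 0 < δ * t := mul_pos hδ ht
          exact lt_add_of_pos_right _ this
      have h3 := ((h1.comp h2).abs).mul_const t
      refine h3.congr' ?_
      filter_upwards [self_mem_nhdsWithin] with δ hδ
      have hδ : 0 < δ := hδ
      simp only [Function.comp, slope_def_field, add_sub_cancel_left]
      rw [abs_div, abs_of_pos (mul_pos hδ ht)]
      field_simp
  -- outer integral
  have hC : ∀ δ t : ℝ, Ψ δ t ≤ ENNReal.ofReal (2 * R) + ENNReal.ofReal (2 * R) := by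
    intro δ t
    have hb : ∀ x, ENNReal.ofReal (theta (|w (x + δ * t) - w x| / δ))
        ≤ (Icc (-R) R).indicator 1 x + (Icc (-R) R).indicator 1 (x + δ * t) := by
      intro x
      by_cases h1 : x ∈ Icc (-R) R
      · rw [indicator_of_mem h1]
        exact le_add_right (by simpa using theta_le_one _)
      · by_cases h2 : x + δ * t ∈ Icc (-R) R
        · rw [indicator_of_mem h2]
          exact le_add_left (by simpa using theta_le_one _)
        · simp [hsupp x h1, hsupp _ h2, hth0]
    have hmI : Measurable ((Icc (-R) R).indicator (1 : ℝ → ℝ≥0∞)) :=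
      measurable_one.indicator measurableSet_Icc
    have hv : ∫⁻ x, (Icc (-R) R).indicator (1 : ℝ → ℝ≥0∞) x = ENNReal.ofReal (2 * R) := by
      rw [lintegral_indicator_one measurableSet_Icc, Real.volume_Icc]; congr 1; ring
    refine (lintegral_mono hb).trans ?_
    rw [lintegral_add_left hmI, lintegral_add_right_eq_self ((Icc (-R) R).indicator 1) (δ * t), hv]
  have hz : ∀ δ t : ℝ, 0 < δ → 0 < t → t ≤ 1 / M → Ψ δ t = 0 := by
    intro δ t hδ ht htM
    have : ∀ x, theta (|w (x + δ * t) - w x| / δ) = 0 := by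
      intro x
      have h1 := hlip (x + δ * t) x
      rw [add_sub_cancel_left, abs_of_pos (mul_pos hδ ht)] at h1
      have h2 : |w (x + δ * t) - w x| / δ ≤ 1 := by
        rw [div_le_one hδ]
        have : M * t ≤ 1 := by rwa [le_div_iff₀ hM, mul_comm] at htM
        nlinarith
      unfold theta
      rw [max_eq_right (by linarith)]; simp
    simp [hΨ, this]
  have hΨm : ∀ δ, Measurable (Ψ δ) := by
    intro δ
    have : Measurable (fun p : ℝ × ℝ =>
      ENNReal.ofReal (theta (|w (p.2 + δ * p.1) - w p.2| / δ))) := by fun_prop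
    exact this.lintegral_prod_right'
  have hout : Tendsto (fun δ => ∫⁻ t in Ioi 0, Ψ δ t * ENNReal.ofReal (1 / t ^ 2)) (𝓝[>] 0)
      (𝓝 (∫⁻ t in Ioi 0, Ψ0 t * ENNReal.ofReal (1 / t ^ 2))) := by
    apply tendsto_lintegral_filter_of_dominated_convergence
      (bound := fun t => (ENNReal.ofReal (2 * R) + ENNReal.ofReal (2 * R))
        * (Ioi (1 / M)).indicator (fun t => ENNReal.ofReal (t ^ (-2 : ℝ))) t)
    · exact Eventually.of_forall fun δ => (hΨm δ).mul (by fun_prop)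
    · filter_upwards [self_mem_nhdsWithin] with δ hδ
      filter_upwards [ae_restrict_mem measurableSet_Ioi] with t ht
      have ht : 0 < t := ht
      by_cases h : t ∈ Ioi (1 / M)
      · rw [indicator_of_mem h]
        refine mul_le_mul' (hC δ t) (le_of_eq ?_)
        rw [Real.rpow_neg ht.le, one_div]; norm_num
      · rw [hz δ t hδ ht (by simpa using h)]
        simp
    · have hm : Measurable ((Ioi (1 / M)).indicator (fun t : ℝ => ENNReal.ofReal (t ^ (-2 : ℝ)))) :=
        Measurable.indicator (by fun_prop) measurableSet_Ioi
      refine ne_top_of_le_ne_top ?_ (setLIntegral_le_lintegral _ _)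
      rw [lintegral_const_mul _ hm, lintegral_indicator measurableSet_Ioi]
      have hi2 : IntegrableOn (fun t : ℝ => t ^ (-2 : ℝ)) (Ioi (1 / M)) :=
        integrableOn_Ioi_rpow_of_lt (by norm_num) (by positivity)
      exact ENNReal.mul_ne_top
        (ENNReal.add_ne_top.2 ⟨ENNReal.ofReal_ne_top, ENNReal.ofReal_ne_top⟩)
        hi2.lintegral_lt_top.ne
    · filter_upwards [ae_restrict_mem measurableSet_Ioi] with t ht
      exact ENNReal.Tendsto.mul_const (hin t ht) (Or.inr ENNReal.ofReal_ne_top)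
  have hlim : Tendsto (fun δ => Lambda1 theta 1 δ w univ) (𝓝[>] 0)
      (𝓝 (2 * ∫⁻ t in Ioi 0, Ψ0 t * ENNReal.ofReal (1 / t ^ 2))) := by
    refine (ENNReal.Tendsto.const_mul hout (Or.inr (by norm_num))).congr' ?_
    filter_upwards [self_mem_nhdsWithin] with δ hδ
    exact (Lambda1_theta_rescale hw hδ).symm
  rw [hlim.limsup_eq, ENNReal.ofReal_mul (by norm_num), ENNReal.ofReal_ofNat, mul_assoc]
  gcongr
  calc ∫⁻ t in Ioi 0, Ψ0 t * ENNReal.ofReal (1 / t ^ 2)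
      = ∫⁻ t in Ioi 0, ∫⁻ x, ENNReal.ofReal (theta (|g x| * t)) * ENNReal.ofReal (1 / t ^ 2) := by
        congr 1; ext t
        rw [lintegral_mul_const _ (by fun_prop)]
    _ = ∫⁻ x, ∫⁻ t in Ioi 0, ENNReal.ofReal (theta (|g x| * t)) * ENNReal.ofReal (1 / t ^ 2) := by
        rw [lintegral_lintegral_swap]
        exact Measurable.aemeasurable (by unfold Function.uncurry; fun_prop)
    _ ≤ ∫⁻ x, ENNReal.ofReal (Real.log 2 * |g x|) :=
        lintegral_mono fun x => lintegral_theta_le (abs_nonneg _)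
    _ = _ := by
        rw [← lintegral_const_mul _ (by fun_prop)]
        congr 1; ext x
        rw [ENNReal.ofReal_mul hlog2.le]

/-- The `L¹` modulus of continuity of a compactly supported function of bounded variation. -/
lemma lintegral_translate_sub_le {v : ℝ → ℝ} (hv : Measurable v) {R ε : ℝ} (hε : 0 < ε)
    (hε1 : ε ≤ 1) (hsupp : ∀ x, x ∉ Icc (-R) R → v x = 0) :
    ∫⁻ x, ENNReal.ofReal |v (x + ε) - v x| ≤ ENNReal.ofReal ε * eVariationOn v univ := by
  obtain ⟨N, hN⟩ := exists_nat_gt ((2 * R + 1) / ε)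
  rw [div_lt_iff₀ hε] at hN
  set a := -R - 1 with ha
  have hm : Measurable (fun x => ENNReal.ofReal |v (x + ε) - v x|) := by fun_prop
  calc ∫⁻ x, ENNReal.ofReal |v (x + ε) - v x|
      = ∫⁻ x in Ico a (a + N * ε), ENNReal.ofReal |v (x + ε) - v x| := by
        rw [setLIntegral_eq_of_support_subset]
        intro x hx
        by_contra hx'
        apply hx
        have h1 : v x = 0 := hsupp x (fun h => hx' ⟨by linarith [h.1], by linarith [h.2]⟩)
        have h2 : v (x + ε) = 0 := hsupp _ (fun h => hx' ⟨by linarith [h.1], by linarith [h.2]⟩)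
        simp [h1, h2]
    _ = ∫⁻ s in Ico a (a + ε), ∑ i ∈ Finset.range N,
          ENNReal.ofReal |v (s + i * ε + ε) - v (s + i * ε)| := lintegral_tile hm a hε.le N
    _ ≤ ∫⁻ s in Ico a (a + ε), eVariationOn v univ := by
        apply lintegral_mono
        intro s
        have hmono : Monotone (fun i : ℕ => s + i * ε) := by
          intro i j hij
          have : (i : ℝ) ≤ j := by exact_mod_cast hij
          simp only
          nlinarith
        refine le_trans (le_of_eq ?_) (eVariationOn.sum_le (f := v) (n := N) hmono
          (fun i => mem_univ _))
        apply Finset.sum_congr rfl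
        intro i _
        rw [edist_dist, Real.dist_eq]
        congr 4
        push_cast; ring
    _ = _ := by
        rw [setLIntegral_const, Real.volume_Ico, add_sub_cancel_left, mul_comm]

/-! ### Recovery family -/

lemma measurable_of_eVariationOn_lt_top {u : ℝ → ℝ} (h : eVariationOn u univ < ⊤) :
    Measurable u := by
  have hb : BoundedVariationOn u univ := h.ne
  obtain ⟨p, q, hp, hq, rfl⟩ := hb.locallyBoundedVariationOn.exists_monotoneOn_sub_monotoneOn
  exact (monotoneOn_univ.1 hp).measurable.sub (monotoneOn_univ.1 hq).measurable

/-- An integrable function with a limit along a filter all of whose sets have infinite measure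
tends to `0` along it. -/
lemma tendsto_zero_of_integrable {u : ℝ → ℝ} (hu : Integrable u) {f : Filter ℝ} {l : ℝ}
    (hf : ∀ s ∈ f, volume s = ⊤) (hl : Tendsto u f (𝓝 l)) : Tendsto u f (𝓝 0) := by
  suffices l = 0 by rwa [this] at hl
  by_contra hne
  have h1 : 0 < |l| := abs_pos.2 hne
  have h2 : ∀ᶠ x in f, |l| / 2 ≤ ‖u x‖ := by
    filter_upwards [hl.norm.eventually (lt_mem_nhds (show |l| / 2 < ‖l‖ by
      rw [Real.norm_eq_abs]; linarith))] with x hx using hx.le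
  have h3 := hu.measure_norm_ge_lt_top (half_pos h1)
  exact h3.ne (hf _ h2)

/-- An integrable function of bounded variation is small outside a compact interval. -/
lemma exists_abs_le_of_notMem_Icc {u : ℝ → ℝ} (hu : Integrable u)
    (h : eVariationOn u univ < ⊤) {η : ℝ} (hη : 0 < η) :
    ∃ R : ℝ, ∀ x, x ∉ Icc (-R) R → |u x| ≤ η := by
  have hb : BoundedVariationOn u univ := h.ne
  have ht := tendsto_zero_of_integrable hu (f := atTop) (fun s hs => by
    obtain ⟨a, ha⟩ := mem_atTop_sets.1 hs
    exact measure_mono_top (s₁ := Ici a) (fun x hx => ha x hx) Real.volume_Ici)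
    hb.tendsto_atTop_limUnder
  have hbt := tendsto_zero_of_integrable hu (f := atBot) (fun s hs => by
    obtain ⟨a, ha⟩ := mem_atBot_sets.1 hs
    exact measure_mono_top (s₁ := Iic a) (fun x hx => ha x hx) Real.volume_Iic)
    hb.tendsto_atBot_limUnder
  obtain ⟨a, ha⟩ := eventually_atTop.1 ((Metric.tendsto_nhds.1 ht) η hη)
  obtain ⟨b, hb⟩ := eventually_atBot.1 ((Metric.tendsto_nhds.1 hbt) η hη)
  refine ⟨max a (-b), fun x hx => ?_⟩
  rcases le_or_gt x b with hxb | hxb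
  · simpa [Real.dist_eq] using (hb x hxb).le
  rcases le_or_gt a x with hxa | hxa
  · simpa [Real.dist_eq] using (ha x hxa).le
  exact absurd ⟨by linarith [le_max_right a (-b)], by linarith [le_max_left a (-b)]⟩ hx

/-- The soft threshold at level `η`: values are moved towards `0` by `η`, and values of modulus
at most `η` become `0`. -/
noncomputable def softThreshold (η s : ℝ) : ℝ := s - max (-η) (min η s)

lemma softThreshold_eq_zero {η s : ℝ} (h : |s| ≤ η) : softThreshold η s = 0 := by
  have := abs_le.1 h
  unfold softThreshold
  rw [min_eq_right this.2, max_eq_right this.1, sub_self]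

lemma abs_softThreshold_sub_self_le {η s : ℝ} (hη : 0 ≤ η) :
    |softThreshold η s - s| ≤ min η |s| := by
  unfold softThreshold
  rcases le_total η s with h | h
  · rw [min_eq_left h, max_eq_right (by linarith), abs_of_nonneg (hη.trans h), min_eq_left h,
      sub_sub_cancel_left, abs_neg, abs_of_nonneg hη]
  · rw [min_eq_right h]
    rcases le_total (-η) s with h' | h'
    · rw [max_eq_right h', sub_self, zero_sub, abs_neg]
      exact le_min (abs_le.2 ⟨h', h⟩) le_rfl
    · rw [max_eq_left h', sub_sub_cancel_left, neg_neg, abs_of_nonneg hη]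
      exact le_min le_rfl (by rw [abs_of_nonpos (by linarith)]; linarith)

lemma lipschitzWith_softThreshold {η : ℝ} : LipschitzWith 1 (softThreshold η) := by
  apply LipschitzWith.of_dist_le_mul
  intro x y
  simp only [softThreshold, Real.dist_eq, NNReal.coe_one, one_mul]
  grind

lemma continuous_softThreshold {η : ℝ} : Continuous (softThreshold η) :=
  lipschitzWith_softThreshold.continuous

/-- An integrable right-continuous function of bounded variation is an `L¹` limit of bounded
compactly supported ones whose variation is no larger: apply soft thresholds. -/
lemma exists_compactSupport_approx {u : ℝ → ℝ} (hu : Integrable u)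
    (hrc : ∀ x : ℝ, ContinuousWithinAt u (Ici x) x) (h : eVariationOn u univ < ⊤)
    {ε : ℝ≥0∞} (hε : 0 < ε) :
    ∃ (v : ℝ → ℝ) (R C : ℝ), 0 < R ∧ 0 < C ∧ Measurable v ∧
      (∀ x, ContinuousWithinAt v (Ici x) x) ∧ (∀ x, |v x| ≤ C) ∧
      (∀ x, x ∉ Icc (-R) R → v x = 0) ∧ eVariationOn v univ ≤ eVariationOn u univ ∧
      eLpNorm (fun x => v x - u x) 1 volume ≤ ε := by
  have hum := measurable_of_eVariationOn_lt_top h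
  have hlim : Tendsto (fun η : ℝ => ∫⁻ x, ‖softThreshold η (u x) - u x‖ₑ) (𝓝[>] 0) (𝓝 0) := by
    rw [← lintegral_zero (μ := (volume : Measure ℝ))]
    apply tendsto_lintegral_filter_of_dominated_convergence (bound := fun x => ‖u x‖ₑ)
    · exact Eventually.of_forall fun η =>
        ((continuous_softThreshold.measurable.comp hum).sub hum).enorm
    · filter_upwards [self_mem_nhdsWithin] with η hη
      refine Eventually.of_forall fun x => ?_
      apply enorm_le_iff_norm_le.2
      exact (abs_softThreshold_sub_self_le (le_of_lt hη)).trans (min_le_right _ _)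
    · exact hu.2.ne
    · refine Eventually.of_forall fun x => ?_
      have h1 : Tendsto (fun η : ℝ => softThreshold η (u x) - u x) (𝓝[>] 0) (𝓝 0) := by
        apply squeeze_zero_norm' (a := fun η => η)
        · filter_upwards [self_mem_nhdsWithin] with η hη
          exact (abs_softThreshold_sub_self_le (le_of_lt hη)).trans (min_le_left _ _)
        · exact tendsto_id.mono_left nhdsWithin_le_nhds
      simpa using h1.enorm
  obtain ⟨η, hη1, hη⟩ := ((hlim.eventually (ge_mem_nhds hε)).and self_mem_nhdsWithin).exists
  have hη : 0 < η := hη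
  obtain ⟨R, hR⟩ := exists_abs_le_of_notMem_Icc hu h hη
  set v : ℝ → ℝ := softThreshold η ∘ u with hv
  have hvar : eVariationOn v univ ≤ eVariationOn u univ := by
    have := (lipschitzWith_softThreshold (η := η)).lipschitzOnWith (s := univ)
      |>.comp_eVariationOn_le (mapsTo_univ u univ)
    simpa using this
  have hsupp : ∀ x, x ∉ Icc (-max R 1) (max R 1) → v x = 0 := by
    intro x hx
    apply softThreshold_eq_zero
    apply hR
    intro hx'
    exact hx ⟨by linarith [hx'.1, le_max_left R 1], hx'.2.trans (le_max_left _ _)⟩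
  refine ⟨v, max R 1, (eVariationOn v univ).toReal + 1, by positivity, by positivity,
    continuous_softThreshold.measurable.comp hum,
    fun x => continuous_softThreshold.continuousAt.comp_continuousWithinAt (hrc x), fun x => ?_,
    hsupp, hvar, ?_⟩
  · have h0 : v (max R 1 + 1) = 0 := hsupp _ (fun hx => by linarith [hx.2])
    have := eVariationOn.edist_le v (mem_univ x) (mem_univ (max R 1 + 1))
    rw [h0, edist_dist, dist_zero_right] at this
    have := (ENNReal.ofReal_le_iff_le_toReal (hvar.trans_lt h).ne).1 this
    rw [Real.norm_eq_abs] at this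
    linarith
  · rw [eLpNorm_one_eq_lintegral_enorm]
    exact hη1

/-- Bounded compactly supported right-continuous functions are approximated in `L¹` by their
Steklov averages `x ↦ ε⁻¹ ∫_x^{x+ε} v`, whose energies are asymptotically at most
`2 log 2 · TV(v)`. -/
lemma exists_steklov_approx {v : ℝ → ℝ} {R C : ℝ} (hC : 0 < C) (hv : Measurable v)
    (hrc : ∀ x, ContinuousWithinAt v (Ici x) x) (hb : ∀ x, |v x| ≤ C)
    (hsupp : ∀ x, x ∉ Icc (-R) R → v x = 0) {e : ℝ≥0∞} (he : 0 < e) :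
    ∃ w : ℝ → ℝ, Measurable w ∧ eLpNorm (fun x => w x - v x) 1 volume ≤ e ∧
      limsup (fun δ : ℝ => Lambda1 theta 1 δ w univ) (𝓝[>] 0)
        ≤ ENNReal.ofReal (2 * Real.log 2) * eVariationOn v univ := by
  have h_int : ∀ a b, IntervalIntegrable v volume a b := fun a b =>
    (intervalIntegrable_const (c := C)).mono_fun hv.aestronglyMeasurable
      (Eventually.of_forall fun x => by
        simpa [abs_of_pos hC] using hb x)
  set V : ℝ → ℝ := fun x => ∫ t in (0 : ℝ)..x, v t with hV
  have hVsub : ∀ x y, V x - V y = ∫ t in y..x, v t := fun x y =>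
    intervalIntegral.integral_interval_sub_left (h_int _ _) (h_int _ _)
  have hVlip : ∀ x y, |V x - V y| ≤ C * |x - y| := by
    intro x y
    rw [hVsub]
    simpa using intervalIntegral.norm_integral_le_of_norm_le_const (f := v) (a := y) (b := x)
      (fun t _ => hb t)
  have hVc : Continuous V := by
    apply (LipschitzWith.of_dist_le_mul (K := ⟨C, hC.le⟩) _).continuous
    intro x y
    exact hVlip x y
  have hVd : ∀ x, HasDerivWithinAt V (v x) (Ioi x) x := fun x =>
    intervalIntegral.integral_hasDerivWithinAt_right (h_int _ _)
      (s := Ici x) (t := Ioi x) (hv.stronglyMeasurable.stronglyMeasurableAtFilter)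
      ((hrc x).mono Ioi_subset_Ici_self)
      |>.mono Ioi_subset_Ici_self
  set W : ℝ → ℝ → ℝ := fun ε x => (V (x + ε) - V x) / ε with hW
  have hWm : ∀ ε, Measurable (W ε) := fun ε => by
    apply Continuous.measurable; simp only [hW]; fun_prop
  have hWsupp : ∀ ε, 0 < ε → ε ≤ 1 → ∀ x, x ∉ Icc (-(R + 1)) (R + 1) → W ε x = 0 := by
    intro ε hε hε1 x hx
    have : V (x + ε) - V x = 0 := by
      rw [hVsub]
      apply intervalIntegral.integral_zero_ae
      refine Eventually.of_forall fun t ht => ?_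
      rw [uIoc_of_le (by linarith)] at ht
      exact hsupp t fun h => hx ⟨by linarith [h.1, ht.2], by linarith [h.2, ht.1]⟩
    simp [hW, this]
  have hWb : ∀ ε, 0 < ε → ∀ x, |W ε x| ≤ C := by
    intro ε hε x
    simp only [hW]
    rw [abs_div, abs_of_pos hε, div_le_iff₀ hε]
    simpa [abs_of_pos hε] using hVlip (x + ε) x
  have hlim : Tendsto (fun ε => ∫⁻ x, ‖W ε x - v x‖ₑ) (𝓝[>] 0) (𝓝 0) := by
    rw [← lintegral_zero (μ := (volume : Measure ℝ))]
    apply tendsto_lintegral_filter_of_dominated_convergence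
      (bound := (Icc (-(R + 1)) (R + 1)).indicator fun _ => ENNReal.ofReal (2 * C))
    · exact Eventually.of_forall fun ε => ((hWm ε).sub hv).enorm
    · filter_upwards [Ioc_mem_nhdsGT one_pos] with ε hε
      refine Eventually.of_forall fun x => ?_
      by_cases hx : x ∈ Icc (-(R + 1)) (R + 1)
      · rw [indicator_of_mem hx, Real.enorm_eq_ofReal_abs]
        apply ENNReal.ofReal_le_ofReal
        have := abs_sub (W ε x) (v x)
        linarith [hWb ε hε.1 x, hb x]
      · rw [hWsupp ε hε.1 hε.2 x hx,
          hsupp x fun h => hx ⟨by linarith [h.1], by linarith [h.2]⟩]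
        simp
    · rw [lintegral_indicator measurableSet_Icc, setLIntegral_const, Real.volume_Icc]
      exact ENNReal.mul_ne_top ENNReal.ofReal_ne_top ENNReal.ofReal_ne_top
    · refine Eventually.of_forall fun x => ?_
      have h1 := (hasDerivWithinAt_iff_tendsto_slope' self_notMem_Ioi).1 (hVd x)
      have h2 : Tendsto (fun ε : ℝ => x + ε) (𝓝[>] 0) (𝓝[>] x) := by
        apply tendsto_nhdsWithin_iff.2
        constructor
        · have : Tendsto (fun ε : ℝ => x + ε) (𝓝[>] 0) (𝓝 (x + 0)) :=
            (Continuous.tendsto (by fun_prop) 0).mono_left nhdsWithin_le_nhds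
          simpa using this
        · filter_upwards [self_mem_nhdsWithin] with ε hε
          exact lt_add_of_pos_right x (mem_Ioi.1 hε)
      have h3 : Tendsto (fun ε => W ε x) (𝓝[>] 0) (𝓝 (v x)) := by
        refine (h1.comp h2).congr fun ε => ?_
        simp [hW, slope_def_field]
      simpa using (h3.sub_const (v x)).enorm
  obtain ⟨ε, hε1, hε⟩ := ((hlim.eventually (ge_mem_nhds he)).and (Ioc_mem_nhdsGT one_pos)).exists
  have hε0 : 0 < ε := hε.1
  refine ⟨W ε, hWm ε, by rwa [eLpNorm_one_eq_lintegral_enorm], ?_⟩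
  have hder : ∀ x, HasDerivWithinAt (W ε) ((v (x + ε) - v x) / ε) (Ioi x) x := by
    intro x
    have h1 : HasDerivWithinAt (fun x => V (x + ε)) (v (x + ε)) (Ioi x) x := by
      have := (hVd (x + ε)).scomp (g₁ := V) (h := fun x => x + ε) x (s := Ioi x)
        (((hasDerivAt_id x).add_const ε).hasDerivWithinAt)
        (fun y hy => by simpa using hy)
      simpa [Function.comp_def] using this
    exact (h1.sub (hVd x)).div_const ε
  have hWl : ∀ x y, |W ε x - W ε y| ≤ (2 * C / ε) * |x - y| := by
    intro x y
    have h1 : W ε x - W ε y = ((V (x + ε) - V (y + ε)) - (V x - V y)) / ε := by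
      simp only [hW]; ring
    have h2 := abs_sub (V (x + ε) - V (y + ε)) (V x - V y)
    have h3 := hVlip (x + ε) (y + ε)
    have h4 := hVlip x y
    rw [add_sub_add_right_eq_sub] at h3
    rw [h1, abs_div, abs_of_pos hε0, div_le_iff₀ hε0]
    calc _ ≤ 2 * C * |x - y| := by linarith
      _ = _ := by field_simp
  refine (limsup_Lambda1_le (by positivity) (hWm ε) (by fun_prop) hWl (hWsupp ε hε0 hε.2)
    hder).trans ?_
  gcongr
  have hm : Measurable fun x => ENNReal.ofReal |v (x + ε) - v x| := by fun_prop
  calc ∫⁻ x, ENNReal.ofReal |(v (x + ε) - v x) / ε|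
      = ∫⁻ x, ENNReal.ofReal |v (x + ε) - v x| * (ENNReal.ofReal ε)⁻¹ := by
        congr 1; ext x
        rw [abs_div, abs_of_pos hε0, ENNReal.ofReal_div_of_pos hε0, div_eq_mul_inv]
    _ = (∫⁻ x, ENNReal.ofReal |v (x + ε) - v x|) * (ENNReal.ofReal ε)⁻¹ :=
        lintegral_mul_const _ hm
    _ ≤ ENNReal.ofReal ε * eVariationOn v univ * (ENNReal.ofReal ε)⁻¹ := by
        gcongr
        exact lintegral_translate_sub_le hv hε0 hε.2 hsupp
    _ = eVariationOn v univ := by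
        rw [mul_right_comm, ENNReal.mul_inv_cancel (by simpa using hε0) ENNReal.ofReal_ne_top,
          one_mul]

/-- Approximants for the recovery family: soft threshold, then Steklov average. -/
lemma exists_recovery_approx {u : ℝ → ℝ} (hu : Integrable u)
    (hrc : ∀ x : ℝ, ContinuousWithinAt u (Ici x) x) (h : eVariationOn u univ < ⊤)
    {ε : ℝ≥0∞} (hε : 0 < ε) :
    ∃ w : ℝ → ℝ, Measurable w ∧ eLpNorm (fun x => w x - u x) 1 volume ≤ ε ∧
      limsup (fun δ : ℝ => Lambda1 theta 1 δ w univ) (𝓝[>] 0)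
        ≤ ENNReal.ofReal (2 * Real.log 2) * eVariationOn u univ := by
  have hε2 : 0 < ε / 2 := ENNReal.half_pos hε.ne'
  obtain ⟨v, R, C, hR, hC, hvm, hvrc, hvb, hvs, hvar, hvu⟩ :=
    exists_compactSupport_approx hu hrc h hε2
  obtain ⟨w, hwm, hwv, hw⟩ := exists_steklov_approx hC hvm hvrc hvb hvs hε2
  refine ⟨w, hwm, ?_, hw.trans (by gcongr)⟩
  have hum := measurable_of_eVariationOn_lt_top h
  have he : (fun x => w x - u x) = (fun x => w x - v x) + fun x => v x - u x := by
    ext x; simp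
  rw [he]
  calc _ ≤ eLpNorm (fun x => w x - v x) 1 volume + eLpNorm (fun x => v x - u x) 1 volume :=
        eLpNorm_add_le (hwm.sub hvm).aestronglyMeasurable (hvm.sub hum).aestronglyMeasurable le_rfl
    _ ≤ ε / 2 + ε / 2 := add_le_add hwv hvu
    _ = ε := ENNReal.add_halves ε

/-- Diagonal selection: choose `k δ` so that `e (k δ) δ` is within `δ` of its infimum. -/
lemma exists_diagonal {e : ℕ → ℝ → ℝ≥0∞}
    (he : ∀ c : ℝ≥0∞, 0 < c → ∃ j, ∀ᶠ δ in 𝓝[>] (0 : ℝ), e j δ ≤ c) :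
    ∃ k : ℝ → ℕ, Tendsto (fun δ => e (k δ) δ) (𝓝[>] 0) (𝓝 0) := by
  have hk : ∀ δ : ℝ, ∃ k, 0 < δ → e k δ ≤ (⨅ j, e j δ) + ENNReal.ofReal δ := by
    intro δ
    by_cases ht : (⨅ j, e j δ) = ⊤
    · exact ⟨0, fun _ => by simp [ht]⟩
    by_cases hδ : 0 < δ
    · have h1 : (⨅ j, e j δ) < (⨅ j, e j δ) + ENNReal.ofReal δ :=
        ENNReal.lt_add_right ht (by simpa using hδ)
      obtain ⟨k, hk⟩ := iInf_lt_iff.1 h1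
      exact ⟨k, fun _ => hk.le⟩
    · exact ⟨0, fun h => absurd h hδ⟩
  choose k hk using hk
  refine ⟨k, ENNReal.tendsto_nhds_zero.2 fun c hc => ?_⟩
  have hc2 : 0 < c / 2 := ENNReal.half_pos hc.ne'
  obtain ⟨j, hj⟩ := he (c / 2) hc2
  have hδ0 : Tendsto ENNReal.ofReal (𝓝[>] 0) (𝓝 0) := by
    have : Tendsto ENNReal.ofReal (𝓝 0) (𝓝 (ENNReal.ofReal 0)) :=
      ENNReal.continuous_ofReal.tendsto 0
    rw [ENNReal.ofReal_zero] at this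
    exact this.mono_left nhdsWithin_le_nhds
  filter_upwards [hj, ENNReal.tendsto_nhds_zero.1 hδ0 _ hc2, self_mem_nhdsWithin] with δ h1 h2 h3
  calc e (k δ) δ ≤ (⨅ j, e j δ) + ENNReal.ofReal δ := hk δ h3
    _ ≤ c / 2 + c / 2 := add_le_add ((iInf_le _ j).trans h1) h2
    _ = c := ENNReal.add_halves c

/-- the interaction law `θ` has shape factor 1: the Gamma-liminf is at least
`2 log 2 · TV(u)`, and (when `TV(u) < ∞`) there is a family realizing this value.
(Note `N(θ) = log 2` and `G_{1,1} = 2`.) -/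
theorem shape_factor_theta (u : ℝ → ℝ) (hu : Integrable u)
    (hrc : ∀ x : ℝ, ContinuousWithinAt u (Set.Ici x) x) :
    (∀ U : ℝ → ℝ → ℝ, (∀ δ > (0 : ℝ), Measurable (U δ)) →
      Tendsto (fun δ : ℝ => eLpNorm (fun x => U δ x - u x) 1 volume) (𝓝[>] 0) (𝓝 0) →
      ENNReal.ofReal (2 * Real.log 2) * eVariationOn u Set.univ ≤
        Filter.liminf (fun δ : ℝ => Lambda1 theta 1 δ (U δ) Set.univ) (𝓝[>] 0)) ∧
    (eVariationOn u Set.univ < ⊤ →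
      ∃ U : ℝ → ℝ → ℝ, (∀ δ > (0 : ℝ), Measurable (U δ)) ∧
        Tendsto (fun δ : ℝ => eLpNorm (fun x => U δ x - u x) 1 volume) (𝓝[>] 0) (𝓝 0) ∧
        Tendsto (fun δ : ℝ => Lambda1 theta 1 δ (U δ) Set.univ) (𝓝[>] 0)
          (𝓝 (ENNReal.ofReal (2 * Real.log 2) * eVariationOn u Set.univ))) := by
  refine ⟨fun U hU hconv => liminf_Lambda1_ge hu hrc hU hconv, fun h => ?_⟩
  set L := ENNReal.ofReal (2 * Real.log 2) * eVariationOn u Set.univ with hL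
  have hLt : L ≠ ⊤ := ENNReal.mul_ne_top ENNReal.ofReal_ne_top h.ne
  have hpos : ∀ j : ℕ, (0 : ℝ≥0∞) < ((j : ℝ≥0∞) + 1)⁻¹ := fun j => by simp
  choose w hwm hwu hw using fun j => exists_recovery_approx hu hrc h (hpos j)
  -- `L¹` error plus the excess of energy; `L` is finite, so truncated subtraction is harmless
  set e : ℕ → ℝ → ℝ≥0∞ := fun j δ =>
    eLpNorm (fun x => w j x - u x) 1 volume + (Lambda1 theta 1 δ (w j) univ - L) with he
  obtain ⟨k, hk⟩ := exists_diagonal (e := e) (by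
    intro c hc
    have hc2 : 0 < c / 2 := ENNReal.half_pos hc.ne'
    obtain ⟨j, hj⟩ := ENNReal.exists_inv_nat_lt hc2.ne'
    refine ⟨j, ?_⟩
    have h1 : limsup (fun δ : ℝ => Lambda1 theta 1 δ (w j) univ) (𝓝[>] 0) < L + c / 2 :=
      (hw j).trans_lt (ENNReal.lt_add_right hLt hc2.ne')
    filter_upwards [eventually_lt_of_limsup_lt h1] with δ hδ
    calc e j δ ≤ c / 2 + c / 2 := by
          refine add_le_add ((hwu j).trans (le_trans ?_ hj.le)) ?_
          · exact ENNReal.inv_le_inv.2 le_self_add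
          · exact tsub_le_iff_left.2 hδ.le
      _ = c := ENNReal.add_halves c)
  have hconv : Tendsto (fun δ : ℝ => eLpNorm (fun x => w (k δ) x - u x) 1 volume)
      (𝓝[>] 0) (𝓝 0) :=
    tendsto_of_tendsto_of_tendsto_of_le_of_le tendsto_const_nhds hk (fun _ => zero_le)
      fun δ => le_self_add
  refine ⟨fun δ => w (k δ), fun δ _ => hwm _, hconv, ?_⟩
  have hup : limsup (fun δ : ℝ => Lambda1 theta 1 δ (w (k δ)) univ) (𝓝[>] 0) ≤ L := by
    have h1 : Tendsto (fun δ => L + e (k δ) δ) (𝓝[>] 0) (𝓝 (L + 0)) := hk.const_add L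
    rw [add_zero] at h1
    rw [← h1.limsup_eq]
    refine limsup_le_limsup (Eventually.of_forall fun δ => ?_)
    exact (tsub_le_iff_left.1 le_rfl).trans (add_le_add le_rfl le_add_self)
  exact tendsto_of_le_liminf_of_limsup_le
    (liminf_Lambda1_ge hu hrc (fun δ _ => hwm _) hconv) hup
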